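/- Let 1 < δ″ < δ′ < 3/2 and let u be an admissible map with ‖u‖ ≠ 0 and D_{δ″}(u) = 0. Then the rescaled map v = (δ′/δ″)·u satisfies D_{δ′}(v) = 0, ‖v‖ ≠ 0, and E(u) − E(v) > (δ″ − 1)·r(δ″)²·(δ′/δ″ − 1). (This yields strict monotone decrease of the depth function d(δ) on [1, 3/2).) -/

import Mathlib

open MeasureTheory Real Filter

/-- x-partial derivative of a map `u : ℝ² → ℝ³`. -/
noncomputable def pderivX (u : ℝ × ℝ → Fin 3 → ℝ) (p : ℝ × ℝ) : Fin 3 → ℝ :=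
  fderiv ℝ u p (1, 0)

/-- y-partial derivative of a map `u : ℝ² → ℝ³`. -/
noncomputable def pderivY (u : ℝ × ℝ → Fin 3 → ℝ) (p : ℝ × ℝ) : Fin 3 → ℝ :=
  fderiv ℝ u p (0, 1)

/-- Euclidean dot product on `ℝ³`. -/
def dot3 (a b : Fin 3 → ℝ) : ℝ := ∑ i, a i * b i

/-- Squared Dirichlet norm `‖u‖² = ∫_Ω |∇u|²`. -/
noncomputable def dirEnergy (Ω : Set (ℝ × ℝ)) (u : ℝ × ℝ → Fin 3 → ℝ) : ℝ :=
  ∫ p in Ω, (dot3 (pderivX u p) (pderivX u p) + dot3 (pderivY u p) (pderivY u p))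

/-- Dirichlet norm `‖u‖`. -/
noncomputable def dnorm (Ω : Set (ℝ × ℝ)) (u : ℝ × ℝ → Fin 3 → ℝ) : ℝ :=
  Real.sqrt (dirEnergy Ω u)

/-- Volume functional `V(u) = ∫_Ω u · (u_x ∧ u_y)`. -/
noncomputable def vol (Ω : Set (ℝ × ℝ)) (u : ℝ × ℝ → Fin 3 → ℝ) : ℝ :=
  ∫ p in Ω, dot3 (u p) (crossProduct (pderivX u p) (pderivY u p))

/-- An admissible map: smooth with compact support contained in `Ω`. -/
def IsAdmissible (Ω : Set (ℝ × ℝ)) (u : ℝ × ℝ → Fin 3 → ℝ) : Prop :=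
  ContDiff ℝ (⊤ : ℕ∞) u ∧ HasCompactSupport u ∧ tsupport u ⊆ Ω

/-- Energy functional `E(u) = (1/2)‖u‖² + (2H/3)·V(u)`. -/
noncomputable def Efun (Ω : Set (ℝ × ℝ)) (H : ℝ) (u : ℝ × ℝ → Fin 3 → ℝ) : ℝ :=
  (1 / 2) * dirEnergy Ω u + (2 * H / 3) * vol Ω u

/-- Modified Nehari functional `D_δ(u) = δ‖u‖² + 2H·V(u)`; `D = D₁`. -/
noncomputable def Dfun (Ω : Set (ℝ × ℝ)) (H δ : ℝ) (u : ℝ × ℝ → Fin 3 → ℝ) : ℝ :=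
  δ * dirEnergy Ω u + 2 * H * vol Ω u

/-- The radius `r(δ) = 2√(2π)·δ/H`. -/
noncomputable def rPW (H δ : ℝ) : ℝ := 2 * Real.sqrt (2 * Real.pi) * δ / H

/-- The coefficient `a(δ) = 1/2 − δ/3`. -/
noncomputable def aPW (δ : ℝ) : ℝ := 1 / 2 - δ / 3

open MeasureTheory Real Filter
open scoped Pointwise

theorem bm_one_compact {K L : Set ℝ} (hK : IsCompact K) (hL : IsCompact L) (hKn : K.Nonempty)
    (hLn : L.Nonempty) {C : Set ℝ} (h : ∀ a ∈ K, ∀ b ∈ L, a + b ∈ C) :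
    volume K + volume L ≤ volume C := by
  have hM : sSup K ∈ K := hK.sSup_mem hKn
  have hm : sInf L ∈ L := hL.sInf_mem hLn
  have hsub : ((fun x => sInf L + x) '' K) ∪ ((fun x => sSup K + x) '' L) ⊆ C := by
    rintro x (⟨y, hy, rfl⟩ | ⟨y, hy, rfl⟩)
    · simpa [add_comm] using h y hy _ hm
    · exact h _ hM y hy
  have hd : AEDisjoint volume ((fun x => sInf L + x) '' K) ((fun x => sSup K + x) '' L) := by
    have : ((fun x => sInf L + x) '' K) ∩ ((fun x => sSup K + x) '' L) ⊆ {sInf L + sSup K} := by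
      rintro x ⟨⟨y, hy, rfl⟩, ⟨z, hz, hzx⟩⟩
      have h1 : y ≤ sSup K := le_csSup hK.bddAbove hy
      have h2 : sInf L ≤ z := csInf_le hL.bddBelow hz
      simp only [Set.mem_singleton_iff] at *
      linarith
    exact measure_mono_null this (by simp)
  calc volume K + volume L = volume (((fun x => sInf L + x) '' K) ∪ ((fun x => sSup K + x) '' L)) := by
        rw [measure_union₀ _ hd]
        · simp [Set.image_add_left, measure_preimage_add]
        · exact ((hL.image (by fun_prop)).measurableSet).nullMeasurableSet
    _ ≤ _ := measure_mono hsub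

theorem bm_one {A B C : Set ℝ} (hA : MeasurableSet A) (hB : MeasurableSet B) (hAn : A.Nonempty)
    (hBn : B.Nonempty) (h : ∀ a ∈ A, ∀ b ∈ B, a + b ∈ C) :
    volume A + volume B ≤ volume C := by
  obtain ⟨a₀, ha₀⟩ := hAn
  obtain ⟨b₀, hb₀⟩ := hBn
  rw [hA.measure_eq_iSup_isCompact, hB.measure_eq_iSup_isCompact]
  simp only [iSup_and']
  refine ENNReal.biSup_add_biSup_le' (p := fun K => K ⊆ A ∧ IsCompact K)
    (q := fun K => K ⊆ B ∧ IsCompact K) ⟨∅, by simp⟩ ⟨∅, by simp⟩ ?_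
  rintro K ⟨hKA, hK⟩ L ⟨hLB, hL⟩
  calc volume K + volume L ≤ volume (insert a₀ K) + volume (insert b₀ L) := by
        gcongr <;> exact Set.subset_insert _ _
    _ ≤ _ := bm_one_compact (hK.insert _) (hL.insert _) (Set.insert_nonempty _ _)
        (Set.insert_nonempty _ _) (by
          intro a ha b hb
          exact h a (Set.insert_subset ha₀ hKA ha) b (Set.insert_subset hb₀ hLB hb))

theorem bm_one_smul {A B C : Set ℝ} (hA : MeasurableSet A) (hB : MeasurableSet B) (hAn : A.Nonempty)
    (hBn : B.Nonempty) {s t : ℝ} (hs : 0 < s) (ht : 0 < t)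
    (h : ∀ a ∈ A, ∀ b ∈ B, s * a + t * b ∈ C) :
    ENNReal.ofReal s * volume A + ENNReal.ofReal t * volume B ≤ volume C := by
  have e1 : ∀ (r : ℝ) (_ : 0 < r) (D : Set ℝ), ENNReal.ofReal r * volume D = volume (r • D) := by
    intro r hr D
    rw [Measure.addHaar_smul]; simp [abs_of_pos hr]
  rw [e1 s hs, e1 t ht]
  refine bm_one (hA.const_smul₀ _) (hB.const_smul₀ _) hAn.smul_set hBn.smul_set ?_
  rintro _ ⟨a, ha, rfl⟩ _ ⟨b, hb, rfl⟩
  exact h a ha b hb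

theorem pl_real {f g h : ℝ → ℝ} (hf : Measurable f) (hg : Measurable g) (hh : Measurable h)
    (f0 : ∀ x, 0 ≤ f x) (f1 : ∀ x, f x ≤ 1) (g0 : ∀ x, 0 ≤ g x) (g1 : ∀ x, g x ≤ 1)
    (h0 : ∀ x, 0 ≤ h x) (fs : ∀ t < 1, ∃ x, t < f x) (gs : ∀ t < 1, ∃ x, t < g x)
    {s t : ℝ} (hs : 0 < s) (ht : 0 < t)
    (H : ∀ r, 0 < r → r < 1 → ∀ x y, r < f x → r < g y → r < h (s * x + t * y)) :
    ENNReal.ofReal s * (∫⁻ x, ENNReal.ofReal (f x)) + ENNReal.ofReal t * (∫⁻ x, ENNReal.ofReal (g x))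
      ≤ ∫⁻ x, ENNReal.ofReal (h x) := by
  rw [lintegral_eq_lintegral_meas_lt volume (ae_of_all _ f0) hf.aemeasurable,
    lintegral_eq_lintegral_meas_lt volume (ae_of_all _ g0) hg.aemeasurable,
    lintegral_eq_lintegral_meas_lt volume (ae_of_all _ h0) hh.aemeasurable]
  have mf : Measurable fun r : ℝ => volume {a | r < f a} := by
    apply Antitone.measurable
    intro a b hab
    exact measure_mono fun x hx => lt_of_le_of_lt hab hx
  have mg : Measurable fun r : ℝ => volume {a | r < g a} := by
    apply Antitone.measurable
    intro a b hab
    exact measure_mono fun x hx => lt_of_le_of_lt hab hx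
  rw [← lintegral_const_mul _ mf, ← lintegral_const_mul _ mg,
    ← lintegral_add_left (mf.const_mul _)]
  refine setLIntegral_mono' measurableSet_Ioi ?_
  intro r hr
  rcases lt_or_ge r 1 with h1 | h1
  · exact bm_one_smul (measurableSet_lt measurable_const hf) (measurableSet_lt measurable_const hg)
      (fs r h1) (gs r h1) hs ht (fun a ha b hb => H r hr h1 a b ha hb)
  · have e1 : {a | r < f a} = ∅ := by
      ext x; simp; linarith [f1 x]
    have e2 : {a | r < g a} = ∅ := by
      ext x; simp; linarith [g1 x]
    simp [e1, e2]

theorem ennreal_amgm {a b : ℝ} (ha : 0 < a) (hb : 0 < b) (hab : a + b = 1) (x y : ENNReal) :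
    x ^ a * y ^ b ≤ ENNReal.ofReal a * x + ENNReal.ofReal b * y := by
  by_cases hx : x = ⊤
  · simp [hx, ENNReal.mul_top, ha]
  by_cases hy : y = ⊤
  · simp [hy, ENNReal.mul_top, hb]
  lift x to NNReal using hx
  lift y to NNReal using hy
  have := NNReal.geom_mean_le_arith_mean2_weighted a.toNNReal b.toNNReal x y (by
    ext; simp [ha.le, hb.le, hab])
  rw [Real.coe_toNNReal _ ha.le, Real.coe_toNNReal _ hb.le] at this
  rw [ENNReal.ofReal, ENNReal.ofReal, ← ENNReal.coe_rpow_of_nonneg _ ha.le,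
    ← ENNReal.coe_rpow_of_nonneg _ hb.le]
  exact_mod_cast this

theorem pl_one_bdd {f g h : ℝ → ENNReal} (hf : Measurable f) (hg : Measurable g) (hh : Measurable h)
    {a b : ℝ} (ha : 0 < a) (hb : 0 < b) (hab : a + b = 1) {N : ENNReal} (hN : N ≠ ⊤)
    (fN : ∀ x, f x ≤ N) (gN : ∀ x, g x ≤ N)
    (H : ∀ x y, f x ^ a * g y ^ b ≤ h (a * x + b * y)) :
    (∫⁻ x, f x) ^ a * (∫⁻ x, g x) ^ b ≤ ∫⁻ x, h x := by
  set F := ⨆ x, f x with hF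
  set G := ⨆ x, g x with hG
  have F1 : F ≠ ⊤ := ne_top_of_le_ne_top hN (iSup_le fN)
  have G1 : G ≠ ⊤ := ne_top_of_le_ne_top hN (iSup_le gN)
  by_cases F0 : F = 0
  · have : ∀ x, f x = 0 := fun x => by
      have := le_iSup f x
      rw [← hF, F0] at this; simpa using this
    simp [this, ha]
  by_cases G0 : G = 0
  · have : ∀ x, g x = 0 := fun x => by
      have := le_iSup g x
      rw [← hG, G0] at this; simpa using this
    simp [this, hb]
  have fF : ∀ x, f x / F ≤ 1 := fun x => ENNReal.div_le_of_le_mul (by simpa using le_iSup f x)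
  have gG : ∀ x, g x / G ≤ 1 := fun x => ENNReal.div_le_of_le_mul (by simpa using le_iSup g x)
  set c := F ^ a * G ^ b with hc
  have c0 : c ≠ 0 := by simp [hc, F0, G0, F1, G1]
  have c1 : c ≠ ⊤ := ENNReal.mul_ne_top (by simp [F1, F0]) (by simp [G1, G0])
  have hm1 : ∀ x, min (h x / c) 1 ≠ ⊤ := fun x => ne_top_of_le_ne_top ENNReal.one_ne_top (min_le_right _ _)
  have key := pl_real (f := fun x => (f x / F).toReal) (g := fun x => (g x / G).toReal)
    (h := fun x => (min (h x / c) 1).toReal)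
    (hf.div_const _).ennreal_toReal (hg.div_const _).ennreal_toReal
    ((hh.div_const _).min measurable_const).ennreal_toReal
    (fun _ => ENNReal.toReal_nonneg) (fun x => ENNReal.toReal_le_of_le_ofReal zero_le_one (by simpa using fF x))
    (fun _ => ENNReal.toReal_nonneg) (fun x => ENNReal.toReal_le_of_le_ofReal zero_le_one (by simpa using gG x))
    (fun _ => ENNReal.toReal_nonneg) ?_ ?_ ha hb ?_
  · have e1 : ∀ x, ENNReal.ofReal (f x / F).toReal = f x / F := fun x =>
      ENNReal.ofReal_toReal (ne_top_of_le_ne_top ENNReal.one_ne_top (fF x))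
    have e2 : ∀ x, ENNReal.ofReal (g x / G).toReal = g x / G := fun x =>
      ENNReal.ofReal_toReal (ne_top_of_le_ne_top ENNReal.one_ne_top (gG x))
    have e3 : ∀ x, ENNReal.ofReal (min (h x / c) 1).toReal = min (h x / c) 1 := fun x =>
      ENNReal.ofReal_toReal (hm1 x)
    simp only [e1, e2, e3] at key
    have l1 : ∫⁻ x, min (h x / c) 1 ≤ (∫⁻ x, h x) / c := by
      calc _ ≤ ∫⁻ x, h x / c := lintegral_mono fun x => min_le_left _ _
        _ = _ := by simp only [div_eq_mul_inv]; rw [lintegral_mul_const _ hh]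
    have l2 : ∫⁻ x, f x / F = (∫⁻ x, f x) / F := by
      simp only [div_eq_mul_inv]; rw [lintegral_mul_const _ hf]
    have l3 : ∫⁻ x, g x / G = (∫⁻ x, g x) / G := by
      simp only [div_eq_mul_inv]; rw [lintegral_mul_const _ hg]
    rw [l2, l3] at key
    have := (ennreal_amgm ha hb hab _ _).trans (key.trans l1)
    rw [ENNReal.div_rpow_of_nonneg _ _ ha.le, ENNReal.div_rpow_of_nonneg _ _ hb.le] at this
    rw [ENNReal.le_div_iff_mul_le (Or.inl c0) (Or.inl c1)] at this
    refine le_trans (le_of_eq ?_) this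
    have r1 : F ^ a ≠ 0 := by simp [F0, F1]
    have r2 : F ^ a ≠ ⊤ := by simp [F0, F1]
    have r3 : G ^ b ≠ 0 := by simp [G0, G1]
    have r4 : G ^ b ≠ ⊤ := by simp [G0, G1]
    rw [hc]
    calc _ = ((∫⁻ x, f x) ^ a / F ^ a * F ^ a) * ((∫⁻ x, g x) ^ b / G ^ b * G ^ b) := by
          rw [ENNReal.div_mul_cancel r1 r2, ENNReal.div_mul_cancel r3 r4]
      _ = _ := by ring
  · intro t ht
    rcases lt_or_ge t 0 with h | h
    · exact ⟨0, lt_of_lt_of_le h ENNReal.toReal_nonneg⟩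
    have : ENNReal.ofReal t * F < F := by
      conv_rhs => rw [← one_mul F]
      exact ENNReal.mul_lt_mul_left F0 F1 (by simpa using ht)
    obtain ⟨x, hx⟩ := lt_iSup_iff.1 this
    refine ⟨x, ?_⟩
    rw [← ENNReal.lt_div_iff_mul_lt (Or.inl F0) (Or.inl F1)] at hx
    exact (ENNReal.ofReal_lt_iff_lt_toReal h (ne_top_of_le_ne_top ENNReal.one_ne_top (fF x))).1 hx
  · intro t ht
    rcases lt_or_ge t 0 with h | h
    · exact ⟨0, lt_of_lt_of_le h ENNReal.toReal_nonneg⟩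
    have : ENNReal.ofReal t * G < G := by
      conv_rhs => rw [← one_mul G]
      exact ENNReal.mul_lt_mul_left G0 G1 (by simpa using ht)
    obtain ⟨x, hx⟩ := lt_iSup_iff.1 this
    refine ⟨x, ?_⟩
    rw [← ENNReal.lt_div_iff_mul_lt (Or.inl G0) (Or.inl G1)] at hx
    exact (ENNReal.ofReal_lt_iff_lt_toReal h (ne_top_of_le_ne_top ENNReal.one_ne_top (gG x))).1 hx
  · intro r hr0 hr1 x y hx hy
    replace hx := (ENNReal.ofReal_lt_iff_lt_toReal hr0.le (ne_top_of_le_ne_top ENNReal.one_ne_top (fF x))).2 hx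
    replace hy := (ENNReal.ofReal_lt_iff_lt_toReal hr0.le (ne_top_of_le_ne_top ENNReal.one_ne_top (gG y))).2 hy
    refine (ENNReal.ofReal_lt_iff_lt_toReal hr0.le (hm1 _)).1 ?_
    refine lt_min ?_ (by simpa using hr1)
    have e : ENNReal.ofReal r = ENNReal.ofReal r ^ a * ENNReal.ofReal r ^ b := by
      rw [← ENNReal.rpow_add _ _ (by simpa using hr0) (by simp), hab, ENNReal.rpow_one]
    rw [e]
    calc _ < (f x / F) ^ a * (g y / G) ^ b :=
          ENNReal.mul_lt_mul (ENNReal.rpow_lt_rpow hx ha) (ENNReal.rpow_lt_rpow hy hb)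
      _ = f x ^ a * g y ^ b / c := by
          rw [ENNReal.div_rpow_of_nonneg _ _ ha.le, ENNReal.div_rpow_of_nonneg _ _ hb.le, hc]
          simp only [div_eq_mul_inv]
          rw [ENNReal.mul_inv (by simp [F0, F1]) (by simp [F0, F1])]
          ring
      _ ≤ _ := by gcongr; exact H x y

/-- The Prékopa–Leindler inequality on a measure space. -/
def PLprop (E : Type) [AddCommGroup E] [Module ℝ E] [MeasureSpace E] : Prop :=
  ∀ a b : ℝ, 0 < a → 0 < b → a + b = 1 → ∀ f g h : E → ENNReal, Measurable f → Measurable g →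
    Measurable h → (∀ x y, f x ^ a * g y ^ b ≤ h (a • x + b • y)) →
    (∫⁻ x, f x) ^ a * (∫⁻ x, g x) ^ b ≤ ∫⁻ x, h x

theorem pl_one : PLprop ℝ := by
  intro a b ha hb hab f g h hf hg hh H
  by_cases f0 : ∫⁻ x, f x = 0
  · simp [f0, ha]
  by_cases g0 : ∫⁻ x, g x = 0
  · simp [g0, hb]
  have lim : ∀ k : ℝ → ENNReal, Measurable k →
      Tendsto (fun n : ℕ => ∫⁻ x, min (k x) n) atTop (nhds (∫⁻ x, k x)) := by
    intro k hk
    refine lintegral_tendsto_of_tendsto_of_monotone (fun n => (hk.min measurable_const).aemeasurable)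
      (ae_of_all _ fun x m n hmn => by dsimp; gcongr) (ae_of_all _ fun x => ?_)
    have : Tendsto (fun n : ℕ => min (k x) (n : ENNReal)) atTop (nhds (min (k x) ⊤)) :=
      tendsto_const_nhds.min ENNReal.tendsto_nat_nhds_top
    simpa using this
  have L := ENNReal.Tendsto.mul
    ((ENNReal.continuous_rpow_const (y := a)).tendsto _ |>.comp (lim f hf)) (Or.inl (by simp [f0, ha.not_gt]))
    ((ENNReal.continuous_rpow_const (y := b)).tendsto _ |>.comp (lim g hg)) (Or.inl (by simp [g0, hb.not_gt]))
  refine le_of_tendsto L (Eventually.of_forall fun n => ?_)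
  refine pl_one_bdd (hf.min measurable_const) (hg.min measurable_const) hh ha hb hab
    (ENNReal.natCast_ne_top n) (fun _ => min_le_right _ _) (fun _ => min_le_right _ _) ?_
  intro x y
  refine le_trans ?_ (H x y)
  gcongr <;> exact min_le_left _ _

theorem pl_prod {E F : Type} [AddCommGroup E] [Module ℝ E] [MeasureSpace E]
    [AddCommGroup F] [Module ℝ F] [MeasureSpace F] [SFinite (volume : Measure E)]
    [SFinite (volume : Measure F)]
    (hE : PLprop E) (hF : PLprop F) : PLprop (E × F) := by
  intro a b ha hb hab f g h hf hg hh H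
  rw [Measure.volume_eq_prod, lintegral_prod _ hf.aemeasurable, lintegral_prod _ hg.aemeasurable,
    lintegral_prod _ hh.aemeasurable]
  refine hE a b ha hb hab _ _ _ hf.lintegral_prod_right' hg.lintegral_prod_right'
    hh.lintegral_prod_right' ?_
  intro x y
  refine hF a b ha hb hab _ _ _ (hf.comp measurable_prodMk_left) (hg.comp measurable_prodMk_left)
    (hh.comp measurable_prodMk_left) ?_
  intro z w
  exact H (x, z) (y, w)

theorem pl_transfer {E F : Type} [AddCommGroup E] [Module ℝ E] [MeasureSpace E]
    [AddCommGroup F] [Module ℝ F] [MeasureSpace F] (hE : PLprop E) (e : E → F)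
    (he : MeasurePreserving e) (hl : ∀ (a b : ℝ) x y, e (a • x + b • y) = a • e x + b • e y) :
    PLprop F := by
  intro a b ha hb hab f g h hf hg hh H
  rw [← he.lintegral_comp hf, ← he.lintegral_comp hg, ← he.lintegral_comp hh]
  refine hE a b ha hb hab _ _ _ (hf.comp he.measurable) (hg.comp he.measurable)
    (hh.comp he.measurable) ?_
  intro x y
  rw [hl]; exact H _ _

theorem pl_pi (n : ℕ) : PLprop (Fin n → ℝ) := by
  induction n with
  | zero =>
    intro a b ha hb hab f g h hf hg hh H
    rw [volume_pi, Measure.pi_of_empty _ 0]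
    simp only [lintegral_dirac]
    convert H 0 0
  | succ n ih =>
    refine pl_transfer (pl_prod pl_one ih)
      (MeasurableEquiv.piFinSuccAbove (fun _ : Fin (n+1) => ℝ) 0).symm
      (volume_preserving_piFinSuccAbove (fun _ : Fin (n+1) => ℝ) 0).symm ?_
    intro a b x y
    ext i
    refine Fin.cases ?_ (fun j => ?_) i <;> simp [MeasurableEquiv.piFinSuccAbove]

abbrev E3 := EuclideanSpace ℝ (Fin 3)

theorem pl_E3 : PLprop E3 :=
  pl_transfer (pl_pi 3) _ (PiLp.volume_preserving_toLp (Fin 3)) (by intros; ext; simp)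

theorem bm_E3 {A B C : Set E3} (hA : MeasurableSet A) (hB : MeasurableSet B) (hC : MeasurableSet C)
    {a b : ℝ} (ha : 0 < a) (hb : 0 < b) (vA : volume A = ENNReal.ofReal (a ^ 3))
    (vB : volume B = ENNReal.ofReal (b ^ 3)) (h : ∀ x ∈ A, ∀ y ∈ B, x + y ∈ C) :
    ENNReal.ofReal ((a + b) ^ 3) ≤ volume C := by
  have hab : 0 < a + b := by positivity
  have key := pl_E3 (a / (a + b)) (b / (a + b)) (by positivity) (by positivity) (by field_simp)
    (((fun x : E3 => (a / (a + b)) • x) ⁻¹' A).indicator 1)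
    (((fun x : E3 => (b / (a + b)) • x) ⁻¹' B).indicator 1) (C.indicator 1)
    (measurable_one.indicator (hA.preimage (by fun_prop)))
    (measurable_one.indicator (hB.preimage (by fun_prop))) (measurable_one.indicator hC) ?_
  · rw [lintegral_indicator_one (hA.preimage (by fun_prop)),
      lintegral_indicator_one (hB.preimage (by fun_prop)), lintegral_indicator_one hC,
      Measure.addHaar_preimage_smul _ (by positivity), Measure.addHaar_preimage_smul _ (by positivity),
      vA, vB, ← ENNReal.ofReal_mul (by positivity), ← ENNReal.ofReal_mul (by positivity)] at key
    have e1 : |((a / (a + b)) ^ Module.finrank ℝ E3)⁻¹| * a ^ 3 = (a + b) ^ 3 := by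
      rw [abs_of_pos (by positivity)]
      simp
      field_simp
    have e2 : |((b / (a + b)) ^ Module.finrank ℝ E3)⁻¹| * b ^ 3 = (a + b) ^ 3 := by
      rw [abs_of_pos (by positivity)]
      simp
      field_simp
    rw [e1, e2, ← ENNReal.rpow_add _ _ (by simpa using pow_pos hab 3) (by simp)] at key
    rwa [show a / (a + b) + b / (a + b) = 1 by field_simp, ENNReal.rpow_one] at key
  · intro x y
    by_cases hx : (a / (a + b)) • x ∈ A
    · by_cases hy : (b / (a + b)) • y ∈ B
      · have := h _ hx _ hy
        simp [Set.indicator, hx, hy, this]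
      · have : (0:ENNReal) ^ (b / (a + b)) = 0 := ENNReal.zero_rpow_of_pos (by positivity)
        simp [Set.indicator, hy, this]
    · have : (0:ENNReal) ^ (a / (a + b)) = 0 := ENNReal.zero_rpow_of_pos (by positivity)
      simp [Set.indicator, hx, this]

open MeasureTheory Real Filter
open scoped Pointwise

/-- cube root of the volume of the unit ball -/
noncomputable def bet : ℝ := (4 * π / 3) ^ (1 / 3 : ℝ)

theorem bet_pos : 0 < bet := by unfold bet; positivity

theorem bet_cube : bet ^ 3 = 4 * π / 3 := by
  unfold bet
  rw [← Real.rpow_natCast, ← Real.rpow_mul (by positivity)]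
  norm_num

theorem bm_thick {A : Set E3} (hA : MeasurableSet A) (hf : volume A ≠ ⊤) {r : ℝ} (hr : 0 < r) :
    volume A + ENNReal.ofReal (3 * r * bet) * volume A ^ (2 / 3 : ℝ)
      ≤ volume (Metric.thickening r A) := by
  have hb := bet_pos
  by_cases h0 : volume A = 0
  · simp [h0]
  have hm : 0 < (volume A).toReal := ENNReal.toReal_pos h0 hf
  set a := (volume A).toReal ^ (1 / 3 : ℝ) with ha
  have ap : 0 < a := by positivity
  have a3 : a ^ 3 = (volume A).toReal := by
    rw [ha, ← Real.rpow_natCast, ← Real.rpow_mul hm.le]; norm_num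
  have vA : volume A = ENNReal.ofReal (a ^ 3) := by rw [a3, ENNReal.ofReal_toReal hf]
  have key := bm_E3 (A := A) (B := Metric.ball 0 r) (C := Metric.thickening r A) hA
    measurableSet_ball Metric.isOpen_thickening.measurableSet ap (b := r * bet) (by positivity) vA ?_ ?_
  · refine le_trans ?_ key
    rw [vA, ENNReal.ofReal_rpow_of_pos (by positivity), ← ENNReal.ofReal_mul (by positivity),
      ← ENNReal.ofReal_add (by positivity) (by positivity)]
    apply ENNReal.ofReal_le_ofReal
    have : (a ^ 3) ^ (2 / 3 : ℝ) = a ^ 2 := by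
      rw [← Real.rpow_natCast, ← Real.rpow_mul ap.le, ← Real.rpow_natCast]; norm_num
    rw [this]
    have : 0 ≤ 3 * a * (r * bet) ^ 2 + (r * bet) ^ 3 := by positivity
    nlinarith
  · rw [EuclideanSpace.volume_ball_fin_three, ← ENNReal.ofReal_pow hr.le, ← ENNReal.ofReal_mul (by positivity),
      mul_pow, bet_cube]
    congr 2; ring
  · intro x hx y hy
    rw [Metric.mem_thickening_iff]
    exact ⟨x, hx, by simpa using hy⟩

theorem sobolev_aux {f : E3 → ℝ} (hf : ContDiff ℝ 1 f) (hc : HasCompactSupport f) {η : ℝ}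
    (hη : 0 < η) :
    ENNReal.ofReal (3 * bet) * ∫⁻ s in Set.Ioi (0 : ℝ), volume {x | s < f x} ^ (2 / 3 : ℝ)
      ≤ (∫⁻ x, ‖fderiv ℝ f x‖ₑ) + ENNReal.ofReal η * volume (Metric.cthickening 1 (tsupport f)) := by
  have hdc : Continuous (fderiv ℝ f) := hf.continuous_fderiv (by norm_num)
  have huc : UniformContinuous (fderiv ℝ f) := (hc.fderiv ℝ).uniformContinuous_of_continuous hdc
  obtain ⟨δ, δ0, hδ⟩ := Metric.uniformContinuous_iff.1 huc η hη
  set K := Metric.cthickening 1 (tsupport f) with hK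
  have Kc : IsCompact K := hc.isCompact.cthickening
  set r := min δ 1 with hr
  have r0 : 0 < r := by positivity
  set G : E3 → ℝ := fun x => max (f x) 0 + K.indicator (fun x => r * (‖fderiv ℝ f x‖ + η)) x with hG
  have mG : Measurable G := by
    apply Measurable.add
    · exact hf.continuous.measurable.max measurable_const
    · exact ((hdc.norm.add continuous_const).const_smul r).measurable.indicator Kc.measurableSet
  have G0 : ∀ x, 0 ≤ G x := fun x => add_nonneg (le_max_right _ _)
    (Set.indicator_nonneg (fun x _ => by positivity) x)
  have hsub : ∀ s : ℝ, 0 < s → Metric.thickening r {x | s < f x} ⊆ {x | s < G x} := by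
    intro s hs x hx
    obtain ⟨y, hy, hxy⟩ := Metric.mem_thickening_iff.1 hx
    simp only [Set.mem_ofPred_eq] at hy ⊢
    have yS : y ∈ tsupport f := subset_tsupport _ (by simp; linarith)
    have xK : x ∈ K := Metric.mem_cthickening_of_dist_le x y 1 _ yS (hxy.le.trans (min_le_right _ _))
    have mv := (convex_ball x r).norm_image_sub_le_of_norm_fderiv_le (f := f) (𝕜 := ℝ)
      (C := ‖fderiv ℝ f x‖ + η) (fun z _ => hf.differentiable (by norm_num) z) (by
        intro z hz
        have h1 := hδ (show dist z x < δ from lt_of_lt_of_le hz (min_le_left _ _))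
        rw [dist_eq_norm] at h1
        have := norm_sub_norm_le (fderiv ℝ f z) (fderiv ℝ f x)
        linarith) (Metric.mem_ball_self r0) (show y ∈ Metric.ball x r by rwa [Metric.mem_ball, dist_comm])
    have h2 : f y - f x ≤ (‖fderiv ℝ f x‖ + η) * r := by
      refine (le_abs_self _).trans (mv.trans ?_)
      gcongr
      rw [← dist_eq_norm, dist_comm]; exact hxy.le
    simp only [hG, Set.indicator_of_mem xK]
    have := le_max_left (f x) 0
    nlinarith
  have fin : ∀ s : ℝ, 0 < s → volume {x | s < f x} ≠ ⊤ := by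
    intro s hs
    refine ne_top_of_le_ne_top hc.isCompact.measure_lt_top.ne (measure_mono (t := tsupport f) ?_)
    intro x hx
    exact subset_tsupport _ (by simp at hx ⊢; linarith)
  have anti : Measurable fun s : ℝ => volume {x | s < f x} := by
    apply Antitone.measurable
    intro a b hab
    exact measure_mono fun x hx => lt_of_le_of_lt hab hx
  have step1 : (∫⁻ s in Set.Ioi (0 : ℝ), volume {x | s < f x}) + ENNReal.ofReal (3 * r * bet) *
      (∫⁻ s in Set.Ioi (0 : ℝ), volume {x | s < f x} ^ (2 / 3 : ℝ)) ≤ ∫⁻ x, ENNReal.ofReal (G x) := by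
    rw [lintegral_eq_lintegral_meas_lt volume (ae_of_all _ G0) mG.aemeasurable,
      ← lintegral_const_mul _ (anti.pow_const _), ← lintegral_add_left anti]
    refine setLIntegral_mono' measurableSet_Ioi fun s hs => ?_
    exact (bm_thick (measurableSet_lt measurable_const hf.continuous.measurable) (fin s hs) r0).trans
      (measure_mono (hsub s hs))
  have step2 : ∫⁻ s in Set.Ioi (0 : ℝ), volume {x | s < f x} = ∫⁻ x, ENNReal.ofReal (max (f x) 0) := by
    rw [lintegral_eq_lintegral_meas_lt (f := fun x => max (f x) 0) volume (ae_of_all _ fun x => le_max_right _ _)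
      (hf.continuous.measurable.max measurable_const).aemeasurable]
    refine setLIntegral_congr_fun measurableSet_Ioi fun s hs => ?_
    have hs' : 0 < s := hs
    simp [hs'.not_gt]
  have step3 : ∫⁻ x, ENNReal.ofReal (G x) ≤ (∫⁻ x, ENNReal.ofReal (max (f x) 0)) +
      ENNReal.ofReal r * ((∫⁻ x, ‖fderiv ℝ f x‖ₑ) + ENNReal.ofReal η * volume K) := by
    rw [← setLIntegral_const, ← lintegral_indicator Kc.measurableSet, ← lintegral_add_left hdc.enorm.measurable,
      ← lintegral_const_mul]
    · rw [← lintegral_add_left (hf.continuous.measurable.max measurable_const).ennreal_ofReal]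
      refine lintegral_mono fun x => ?_
      simp only [hG]
      rw [ENNReal.ofReal_add (le_max_right _ _) (Set.indicator_nonneg (fun x _ => by positivity) x)]
      gcongr
      by_cases hx : x ∈ K
      · simp only [Set.indicator_of_mem hx]
        rw [ENNReal.ofReal_mul r0.le, ENNReal.ofReal_add (norm_nonneg _) hη.le, ofReal_norm]
      · simp [Set.indicator_of_notMem hx]
    · exact hdc.enorm.measurable.add (measurable_const.indicator Kc.measurableSet)
  have finI : ∫⁻ x, ENNReal.ofReal (max (f x) 0) ≠ ⊤ := by
    have : Integrable (fun x => max (f x) 0) :=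
      (hf.continuous.integrable_of_hasCompactSupport hc).pos_part
    exact this.lintegral_lt_top.ne
  rw [step2] at step1
  have h4 := step1.trans step3
  rw [ENNReal.add_le_add_iff_left finI, show 3 * r * bet = r * (3 * bet) by ring,
    ENNReal.ofReal_mul r0.le, mul_assoc, ENNReal.mul_le_mul_iff_right (by simpa using r0) (by simp)] at h4
  exact h4

theorem sobolev {f : E3 → ℝ} (hf : ContDiff ℝ 1 f) (hc : HasCompactSupport f) :
    ENNReal.ofReal (3 * bet) * ∫⁻ s in Set.Ioi (0 : ℝ), volume {x | s < f x} ^ (2 / 3 : ℝ)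
      ≤ ∫⁻ x, ‖fderiv ℝ f x‖ₑ := by
  have hK : volume (Metric.cthickening 1 (tsupport f)) ≠ ⊤ := hc.isCompact.cthickening.measure_lt_top.ne
  have lim : Tendsto (fun η : ℝ => (∫⁻ x, ‖fderiv ℝ f x‖ₑ) + ENNReal.ofReal η *
      volume (Metric.cthickening 1 (tsupport f))) (nhdsWithin 0 (Set.Ioi 0)) (nhds ((∫⁻ x, ‖fderiv ℝ f x‖ₑ) +
      ENNReal.ofReal 0 * volume (Metric.cthickening 1 (tsupport f)))) := by
    refine tendsto_const_nhds.add (ENNReal.Tendsto.mul_const ?_ (Or.inr hK))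
    exact ((ENNReal.continuous_ofReal.tendsto 0).mono_left nhdsWithin_le_nhds)
  simp only [ENNReal.ofReal_zero, zero_mul, add_zero] at lim
  refine ge_of_tendsto lim ?_
  filter_upwards [self_mem_nhdsWithin] with η hη
  exact sobolev_aux hf hc hη

open MeasureTheory Real Filter
open scoped Pointwise

theorem int_level {w : E3 → ℝ} (hw : Integrable w) (hZint : ∀ᵐ y, ∃ k : ℤ, w y = k) :
    (∫⁻ y, ENNReal.ofReal (w y)) ^ (2 / 3 : ℝ) ≤
      ∫⁻ s in Set.Ioi (0 : ℝ), volume {x | s < w x} ^ (2 / 3 : ℝ) := by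
  set M := ∫⁻ y, ENNReal.ofReal (w y) with hM
  have Mfin : M ≠ ⊤ := hw.lintegral_lt_top.ne
  by_cases M0 : M = 0
  · rw [M0]; simp
  have hlc : M = ∫⁻ s in Set.Ioi (0 : ℝ), volume {x | s < w x} := by
    have : M = ∫⁻ y, ENNReal.ofReal (max (w y) 0) := by
      rw [hM]; congr 1; ext y; simp
    rw [this, lintegral_eq_lintegral_meas_lt (f := fun y => max (w y) 0) volume
      (ae_of_all _ fun x => le_max_right _ _) (hw.aemeasurable.max aemeasurable_const)]
    refine setLIntegral_congr_fun measurableSet_Ioi fun s hs => ?_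
    have hs' : 0 < s := hs
    simp [hs'.not_gt]
  have hle : ∀ s : ℝ, 0 < s → volume {x | s < w x} ≤ M := by
    intro s hs
    have := meas_ge_le_lintegral_div (μ := volume) (f := fun y => ENNReal.ofReal (w y))
      hw.aemeasurable.ennreal_ofReal (ε := 1) one_ne_zero ENNReal.one_ne_top
    rw [div_one] at this
    refine le_trans (measure_mono_ae ?_) this
    filter_upwards [hZint] with y hy hs'
    obtain ⟨k, hk⟩ := hy
    have h1 : s < w y := hs'
    have h2 : (0 : ℝ) < k := by rw [← hk]; linarith
    have h3 : 1 ≤ k := by exact_mod_cast h2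
    change (1 : ENNReal) ≤ ENNReal.ofReal (w y)
    rw [hk]
    simp only [ENNReal.one_le_ofReal]
    exact_mod_cast h3
  have anti : Measurable fun s : ℝ => volume {x | s < w x} := by
    apply Antitone.measurable
    intro a b hab
    exact measure_mono fun x hx => lt_of_le_of_lt hab hx
  have h1 : M ≤ M ^ (1 / 3 : ℝ) * ∫⁻ s in Set.Ioi (0 : ℝ), volume {x | s < w x} ^ (2 / 3 : ℝ) := by
    rw [← lintegral_const_mul _ (anti.pow_const _)]
    conv_lhs => rw [hlc]
    refine setLIntegral_mono' measurableSet_Ioi fun s hs => ?_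
    calc volume {x | s < w x} = volume {x | s < w x} ^ (1 / 3 : ℝ) * volume {x | s < w x} ^ (2 / 3 : ℝ) := by
          rw [← ENNReal.rpow_add_of_nonneg _ _ (by norm_num) (by norm_num)]; norm_num
      _ ≤ _ := by gcongr; exact hle s hs
  have h2 : M = M ^ (1 / 3 : ℝ) * M ^ (2 / 3 : ℝ) := by
    rw [← ENNReal.rpow_add_of_nonneg _ _ (by norm_num) (by norm_num)]; norm_num
  nth_rewrite 1 [h2] at h1
  rwa [ENNReal.mul_le_mul_iff_right (by simp [M0, Mfin]) (by simp [M0, Mfin])] at h1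

open scoped Convolution in
theorem iso_of_mollify {w : E3 → ℝ} (hw : Integrable w) (hc : HasCompactSupport w)
    (hZint : ∀ᵐ y, ∃ k : ℤ, w y = k) {A : ENNReal}
    (hA : ∀ φ : ContDiffBump (0 : E3),
      ∫⁻ y, ‖fderiv ℝ (φ.normed volume ⋆[ContinuousLinearMap.lsmul ℝ ℝ, volume] w) y‖ₑ ≤ A) :
    ENNReal.ofReal (3 * bet) * (∫⁻ y, ENNReal.ofReal (w y)) ^ (2 / 3 : ℝ) ≤ A := by
  let φ : ℕ → ContDiffBump (0 : E3) := fun n =>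
    ⟨1 / ((n : ℝ) + 1), 2 * (1 / ((n : ℝ) + 1)), by positivity, by
      have : (0:ℝ) < 1 / ((n : ℝ) + 1) := by positivity
      linarith⟩
  set f : ℕ → E3 → ℝ := fun n => ((φ n).normed volume ⋆[ContinuousLinearMap.lsmul ℝ ℝ, volume] w) with hf
  have hlim : ∀ᵐ y, Tendsto (fun n => f n y) atTop (nhds (w y)) := by
    refine ContDiffBump.ae_convolution_tendsto_right_of_locallyIntegrable (K := 2) ?_ ?_
      hw.locallyIntegrable
    · have := (tendsto_one_div_add_atTop_nhds_zero_nat (𝕜 := ℝ)).const_mul 2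
      rw [mul_zero] at this
      exact this
    · exact Eventually.of_forall fun n => le_rfl
  have fsm : ∀ n, ContDiff ℝ 1 (f n) := fun n =>
    (φ n).hasCompactSupport_normed.contDiff_convolution_left _ (φ n).contDiff_normed hw.locallyIntegrable
  have fcs : ∀ n, HasCompactSupport (f n) := fun n =>
    (φ n).hasCompactSupport_normed.convolution _ hc
  have hS : ∀ n, ENNReal.ofReal (3 * bet) * ∫⁻ s in Set.Ioi (0 : ℝ), volume {x | s < f n x} ^ (2 / 3 : ℝ) ≤ A :=
    fun n => (sobolev (fsm n) (fcs n)).trans (hA (φ n))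
  have hlev : ∀ s : ℝ, volume {x | s < w x} ≤ liminf (fun n => volume {x | s < f n x}) atTop := by
    intro s
    have mf : ∀ n, MeasurableSet {x | s < f n x} := fun n =>
      measurableSet_lt measurable_const (fsm n).continuous.measurable
    have nw : NullMeasurableSet {x | s < w x} := nullMeasurableSet_lt aemeasurable_const hw.aemeasurable
    calc volume {x | s < w x} = ∫⁻ x, ({x | s < w x}).indicator 1 x := (lintegral_indicator_one₀ nw).symm
      _ ≤ ∫⁻ x, liminf (fun n => ({x | s < f n x}).indicator (1 : E3 → ENNReal) x) atTop := by
          refine lintegral_mono_ae ?_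
          filter_upwards [hlim] with x hx
          by_cases h : s < w x
          · have ev : ∀ᶠ n in atTop, ({x | s < f n x}).indicator (1 : E3 → ENNReal) x = 1 := by
              filter_upwards [hx.eventually_const_lt h] with n hn
              simp [Set.indicator, hn]
            rw [liminf_congr ev]
            simp [Set.indicator, h]
          · simp [Set.indicator, h]
      _ ≤ liminf (fun n => ∫⁻ x, ({x | s < f n x}).indicator (1 : E3 → ENNReal) x) atTop :=
          lintegral_liminf_le fun n => measurable_one.indicator (mf n)
      _ = _ := by simp only [lintegral_indicator_one (mf _)]
  have anti : ∀ n, Measurable fun s : ℝ => volume {x | s < f n x} := by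
    intro n
    apply Antitone.measurable
    intro a b hab
    exact measure_mono fun x hx => lt_of_le_of_lt hab hx
  have h23 : (0:ℝ) < 2 / 3 := by norm_num
  have c0 : ENNReal.ofReal (3 * bet) ≠ 0 := by have := bet_pos; simpa using this
  calc _ ≤ ENNReal.ofReal (3 * bet) * ∫⁻ s in Set.Ioi (0 : ℝ), volume {x | s < w x} ^ (2 / 3 : ℝ) := by
        gcongr; exact int_level hw hZint
    _ ≤ ENNReal.ofReal (3 * bet) * ∫⁻ s in Set.Ioi (0 : ℝ),
          liminf (fun n => volume {x | s < f n x} ^ (2 / 3 : ℝ)) atTop := by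
        gcongr with s
        have := OrderIso.liminf_apply (ENNReal.orderIsoRpow (2 / 3) h23) (f := atTop)
          (u := fun n => volume {x | s < f n x})
        simp only [ENNReal.orderIsoRpow_apply] at this
        rw [← this]
        gcongr
        exact hlev s
    _ ≤ ENNReal.ofReal (3 * bet) * liminf (fun n => ∫⁻ s in Set.Ioi (0 : ℝ),
          volume {x | s < f n x} ^ (2 / 3 : ℝ)) atTop := by
        gcongr
        exact lintegral_liminf_le fun n => (anti n).pow_const _
    _ ≤ A := by
        rw [mul_comm, ← ENNReal.le_div_iff_mul_le (Or.inl c0) (Or.inl ENNReal.ofReal_ne_top)]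
        refine (liminf_le_liminf (v := fun _ => A / ENNReal.ofReal (3 * bet)) (Eventually.of_forall fun n => ?_)).trans (by simp)
        rw [ENNReal.le_div_iff_mul_le (Or.inl c0) (Or.inl ENNReal.ofReal_ne_top), mul_comm]
        exact hS n

open MeasureTheory Real Filter
open scoped Pointwise

theorem ennreal_tsum_ind {D : ℕ → Set E3} (y : E3)
    (h : ∑' n, (D n).indicator (1 : E3 → ENNReal) y ≠ ⊤) :
    ∃ k : ℤ, (∑' n, (D n).indicator (1 : E3 → ENNReal) y).toReal = k := by
  have hfin := ENNReal.finite_const_le_of_tsum_ne_top h one_ne_zero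
  have e : ∑' n, (D n).indicator (1 : E3 → ENNReal) y = (hfin.toFinset.card : ENNReal) := by
    rw [tsum_eq_sum (s := hfin.toFinset)]
    · rw [Finset.sum_congr rfl (g := fun _ => (1 : ENNReal))]
      · simp
      · intro n hn
        by_cases hy : y ∈ D n
        · simp [hy]
        · simp [hy] at hn
    · intro n hn
      by_cases hy : y ∈ D n
      · simp [hy] at hn
      · simp [hy]
  exact ⟨hfin.toFinset.card, by rw [e]; simp⟩

theorem mult_exists {U : E3 → E3} {U' : E3 → E3 →L[ℝ] E3} (hU : ∀ x, HasFDerivAt U (U' x) x)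
    (hU' : Continuous U') {S : Set E3} (hS : MeasurableSet S)
    (hdet : ∀ x ∈ S, (U' x).det ≠ 0) (hi : IntegrableOn (fun x => (U' x).det) S) :
    ∃ N : E3 → ℝ, Integrable N ∧ (∀ᵐ y, ∃ k : ℤ, N y = k) ∧ (∀ y, y ∉ U '' S → N y = 0) ∧
      ∀ φ : E3 → ℝ, Continuous φ → ∫ x in S, |(U' x).det| * φ (U x) = ∫ y, N y * φ y := by
  classical
  have hUc : Continuous U := continuous_iff_continuousAt.2 fun x => (hU x).continuousAt
  let r : (E3 →L[ℝ] E3) → NNReal := fun A =>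
    if h : A.det ≠ 0 then ‖((A.toContinuousLinearEquivOfDetNeZero h).symm : E3 →L[ℝ] E3)‖₊⁻¹ / 2 else 1
  have rpos : ∀ A, r A ≠ 0 := by
    intro A
    by_cases h : A.det ≠ 0
    · simp only [r, dif_pos h]
      have := ContinuousLinearEquiv.nnnorm_symm_pos (A.toContinuousLinearEquivOfDetNeZero h)
      positivity
    · simp only [r, dif_neg h]; exact one_ne_zero
  obtain ⟨t, A, tdisj, tmeas, tcov, tapp, tA⟩ :=
    exists_partition_approximatesLinearOn_of_hasFDerivWithinAt U S U'
      (fun x _ => (hU x).hasFDerivWithinAt) r rpos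
  have inj : ∀ n, Set.InjOn U (S ∩ t n) := by
    intro n
    rcases S.eq_empty_or_nonempty with h | h
    · simp [h]
    obtain ⟨y, hy, hAy⟩ := tA h n
    have hd : (A n).det ≠ 0 := by rw [hAy]; exact hdet y hy
    have ha := tapp n
    simp only [r, dif_pos hd] at ha
    have ha' : ApproximatesLinearOn U (((A n).toContinuousLinearEquivOfDetNeZero hd : E3 ≃L[ℝ] E3) : E3 →L[ℝ] E3)
      (S ∩ t n) (‖(((A n).toContinuousLinearEquivOfDetNeZero hd).symm : E3 →L[ℝ] E3)‖₊⁻¹ / 2) := by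
      convert ha
      ext x; simp
    refine ha'.injOn (Or.inr ?_)
    have := ContinuousLinearEquiv.nnnorm_symm_pos ((A n).toContinuousLinearEquivOfDetNeZero hd)
    exact half_lt_self (by positivity)
  have Bm : ∀ n, MeasurableSet (S ∩ t n) := fun n => hS.inter (tmeas n)
  have hd : ∀ n, ∀ x ∈ S ∩ t n, HasFDerivWithinAt U (U' x) (S ∩ t n) x :=
    fun n x _ => (hU x).hasFDerivWithinAt
  set D : ℕ → Set E3 := fun n => U '' (S ∩ t n) with hD
  have Dm : ∀ n, MeasurableSet (D n) := fun n => measurable_image_of_fderivWithin (Bm n) (hd n) (inj n)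
  have Seq : S = ⋃ n, S ∩ t n := by
    rw [← Set.inter_iUnion]
    exact (Set.inter_eq_left.2 tcov).symm
  have Bd : Pairwise (Function.onFun Disjoint fun n => S ∩ t n) := fun i j hij =>
    (tdisj hij).mono Set.inter_subset_right Set.inter_subset_right
  set M : E3 → ENNReal := fun y => ∑' n, (D n).indicator (1 : E3 → ENNReal) y with hM
  have Mm : Measurable M := Measurable.tsum fun n => measurable_one.indicator (Dm n)
  have detc : Continuous fun x => (U' x).det := ContinuousLinearMap.continuous_det.comp hU'
  have key : ∀ g : E3 → ENNReal, Measurable g →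
      ∫⁻ x in S, ENNReal.ofReal |(U' x).det| * g (U x) = ∫⁻ y, M y * g y := by
    intro g hg
    calc ∫⁻ x in S, ENNReal.ofReal |(U' x).det| * g (U x)
        = ∫⁻ x in (⋃ n, S ∩ t n), ENNReal.ofReal |(U' x).det| * g (U x) := by rw [← Seq]
      _ = ∑' n, ∫⁻ x in S ∩ t n, ENNReal.ofReal |(U' x).det| * g (U x) := lintegral_iUnion Bm Bd _
      _ = ∑' n, ∫⁻ y in D n, g y := by
          congr 1; ext n
          rw [lintegral_image_eq_lintegral_abs_det_fderiv_mul volume (Bm n) (hd n) (inj n)]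
      _ = ∑' n, ∫⁻ y, (D n).indicator 1 y * g y := by
          congr 1; ext n
          rw [← lintegral_indicator (Dm n)]
          congr 1; ext y
          by_cases hy : y ∈ D n <;> simp [hy]
      _ = ∫⁻ y, ∑' n, (D n).indicator 1 y * g y := by
          rw [lintegral_tsum]
          exact fun n => ((measurable_one.indicator (Dm n)).mul hg).aemeasurable
      _ = _ := by simp only [ENNReal.tsum_mul_right, hM]
  have Mfin : ∫⁻ y, M y ≠ ⊤ := by
    have := key 1 measurable_one
    simp only [Pi.one_apply, mul_one] at this
    rw [← this]
    have := hi.abs.lintegral_lt_top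
    exact this.ne
  have Mae : ∀ᵐ y, M y < ⊤ := ae_lt_top Mm Mfin
  refine ⟨fun y => (M y).toReal, integrable_toReal_of_lintegral_ne_top Mm.aemeasurable Mfin, ?_, ?_, ?_⟩
  · filter_upwards [Mae] with y hy
    exact ennreal_tsum_ind y hy.ne
  · intro y hy
    have : ∀ n, y ∉ D n := fun n hn => hy (Set.image_mono Set.inter_subset_left hn)
    simp [hM, this]
  · intro φ hφ
    have hmeas : Measure.map U ((volume.restrict S).withDensity fun x => ENNReal.ofReal |(U' x).det|)
        = volume.withDensity M := by
      ext s hs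
      rw [Measure.map_apply hUc.measurable hs, withDensity_apply _ hs,
        withDensity_apply _ (hUc.measurable hs), ← lintegral_indicator hs,
        ← lintegral_indicator (hUc.measurable hs)]
      have := key (s.indicator 1) (measurable_one.indicator hs)
      have e2 : ∫⁻ y, s.indicator M y = ∫⁻ y, M y * s.indicator 1 y := by
        refine lintegral_congr fun y => ?_
        by_cases hx : y ∈ s <;> simp [hx]
      rw [e2, ← this]
      refine lintegral_congr fun x => ?_
      by_cases hx : U x ∈ s <;> simp [Set.indicator, hx]
    have h1 := integral_map (μ := (volume.restrict S).withDensity fun x => ENNReal.ofReal |(U' x).det|)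
      hUc.measurable.aemeasurable (f := φ) hφ.aestronglyMeasurable
    rw [hmeas, integral_withDensity_eq_integral_toReal_smul Mm Mae,
      integral_withDensity_eq_integral_toReal_smul detc.abs.measurable.ennreal_ofReal
        (ae_of_all _ fun _ => ENNReal.ofReal_lt_top)] at h1
    simp only [smul_eq_mul, ENNReal.toReal_ofReal (abs_nonneg _)] at h1
    exact h1.symm

theorem degree_exists {U : E3 → E3} {U' : E3 → E3 →L[ℝ] E3} (hU : ∀ x, HasFDerivAt U (U' x) x)
    (hU' : Continuous U') {S : Set E3} (hS : MeasurableSet S)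
    (hi : IntegrableOn (fun x => (U' x).det) S) :
    ∃ w : E3 → ℝ, Integrable w ∧ (∀ᵐ y, ∃ k : ℤ, w y = k) ∧ (∀ y, y ∉ U '' S → w y = 0) ∧
      ∀ φ : E3 → ℝ, Continuous φ → (∃ C, ∀ y, |φ y| ≤ C) →
        ∫ x in S, (U' x).det * φ (U x) = ∫ y, w y * φ y := by
  have hUc : Continuous U := continuous_iff_continuousAt.2 fun x => (hU x).continuousAt
  have detc : Continuous fun x => (U' x).det := ContinuousLinearMap.continuous_det.comp hU'
  set S1 := S ∩ {x | 0 < (U' x).det} with hS1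
  set S2 := S ∩ {x | (U' x).det < 0} with hS2
  have m1 : MeasurableSet S1 := hS.inter (measurableSet_lt measurable_const detc.measurable)
  have m2 : MeasurableSet S2 := hS.inter (measurableSet_lt detc.measurable measurable_const)
  obtain ⟨N1, i1, k1, z1, f1⟩ := mult_exists hU hU' m1 (fun x hx => ne_of_gt hx.2)
    (hi.mono_set Set.inter_subset_left)
  obtain ⟨N2, i2, k2, z2, f2⟩ := mult_exists hU hU' m2 (fun x hx => ne_of_lt hx.2)
    (hi.mono_set Set.inter_subset_left)
  refine ⟨fun y => N1 y - N2 y, i1.sub i2, ?_, ?_, ?_⟩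
  · filter_upwards [k1, k2] with y ⟨a, ha⟩ ⟨b, hb⟩
    exact ⟨a - b, by rw [ha, hb]; simp⟩
  · intro y hy
    change N1 y - N2 y = 0
    rw [z1 y fun h => hy (Set.image_mono Set.inter_subset_left h),
      z2 y fun h => hy (Set.image_mono Set.inter_subset_left h), sub_zero]
  · rintro φ hφ ⟨C, hC⟩
    have j1 : Integrable fun y => N1 y * φ y :=
      i1.mul_bdd hφ.aestronglyMeasurable (ae_of_all _ hC)
    have j2 : Integrable fun y => N2 y * φ y :=
      i2.mul_bdd hφ.aestronglyMeasurable (ae_of_all _ hC)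
    have j3 : IntegrableOn (fun x => (U' x).det * φ (U x)) S :=
      hi.mul_bdd (hφ.comp hUc).aestronglyMeasurable (ae_of_all _ fun x => hC _)
    simp only [sub_mul]
    rw [integral_sub j1 j2, ← f1 φ hφ, ← f2 φ hφ]
    have e1 : ∫ x in S1, |(U' x).det| * φ (U x) = ∫ x in S1, (U' x).det * φ (U x) :=
      setIntegral_congr_fun m1 fun x hx => by
        have : 0 < (U' x).det := hx.2
        simp only [abs_of_pos this]
    have e2 : ∫ x in S2, |(U' x).det| * φ (U x) = - ∫ x in S2, (U' x).det * φ (U x) := by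
      rw [← integral_neg]
      exact setIntegral_congr_fun m2 fun x hx => by
        have : (U' x).det < 0 := hx.2
        simp only [abs_of_neg this]; ring
    rw [e1, e2, sub_neg_eq_add, ← setIntegral_union _ m2 (j3.mono_set Set.inter_subset_left)
      (j3.mono_set Set.inter_subset_left)]
    · refine setIntegral_eq_of_subset_of_forall_sdiff_eq_zero hS
        (Set.union_subset Set.inter_subset_left Set.inter_subset_left) ?_
      rintro x ⟨hx, hx'⟩
      have : (U' x).det = 0 := by
        by_contra hne
        rcases lt_or_gt_of_ne hne with h | h
        · exact hx' (Or.inr ⟨hx, h⟩)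
        · exact hx' (Or.inl ⟨hx, h⟩)
      simp [this]
    · rw [Set.disjoint_left]
      rintro x ⟨_, h1⟩ ⟨_, h2⟩
      exact lt_asymm (show 0 < (U' x).det from h1) h2

open MeasureTheory Real Filter
open scoped Pointwise

theorem ibp_pair {F c : ℝ × ℝ → ℝ} (hF : ContDiff ℝ 1 F) (hFc : HasCompactSupport F)
    (hc : ContDiff ℝ 2 c) :
    ∫ p, (fderiv ℝ F p (1, 0) * fderiv ℝ c p (0, 1) - fderiv ℝ F p (0, 1) * fderiv ℝ c p (1, 0)) = 0 := by
  have hFd : Continuous (fderiv ℝ F) := hF.continuous_fderiv (by norm_num)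
  have hcd : ContDiff ℝ 1 (fderiv ℝ c) := hc.fderiv_right (by norm_num)
  have hFdc : HasCompactSupport (fderiv ℝ F) := hFc.fderiv ℝ
  have cv : ∀ v : ℝ × ℝ, ContDiff ℝ 1 (fun p => fderiv ℝ c p v) := fun v => hcd.clm_apply contDiff_const
  have Fv : ∀ v : ℝ × ℝ, Continuous (fun p => fderiv ℝ F p v) := fun v => hFd.clm_apply continuous_const
  have Fvc : ∀ v : ℝ × ℝ, HasCompactSupport (fun p => fderiv ℝ F p v) := fun v => hFc.fderiv_apply ℝ v
  have i1 : ∀ v w : ℝ × ℝ, Integrable (fun p => fderiv ℝ F p v * fderiv ℝ c p w) := fun v w =>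
    ((Fv v).mul (cv w).continuous).integrable_of_hasCompactSupport ((Fvc v).mul_right)
  have i2 : ∀ v w : ℝ × ℝ, Integrable (fun p => F p * fderiv ℝ (fun p => fderiv ℝ c p w) p v) := fun v w =>
    (hF.continuous.mul (((cv w).continuous_fderiv (by norm_num)).clm_apply
      continuous_const)).integrable_of_hasCompactSupport hFc.mul_right
  have i3 : ∀ w : ℝ × ℝ, Integrable (fun p => F p * fderiv ℝ c p w) := fun w =>
    (hF.continuous.mul (cv w).continuous).integrable_of_hasCompactSupport hFc.mul_right
  have ib : ∀ v w : ℝ × ℝ, ∫ p, F p * fderiv ℝ (fun p => fderiv ℝ c p w) p v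
      = - ∫ p, fderiv ℝ F p v * fderiv ℝ c p w := fun v w =>
    integral_mul_fderiv_eq_neg_fderiv_mul_of_integrable (i1 v w) (i2 v w) (i3 w)
      (fun x _ => hF.differentiable (by norm_num) x)
      (fun x _ => (cv w).differentiable (by norm_num) x)
  rw [integral_sub (i1 _ _) (i1 _ _)]
  have s : ∀ p, fderiv ℝ (fun p => fderiv ℝ c p (0, 1)) p (1, 0)
      = fderiv ℝ (fun p => fderiv ℝ c p (1, 0)) p (0, 1) := by
    intro p
    have hd : DifferentiableAt ℝ (fderiv ℝ c) p := hcd.differentiable (by norm_num) p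
    rw [fderiv_clm_apply hd (differentiableAt_const _), fderiv_clm_apply hd (differentiableAt_const _)]
    have := (hc.contDiffAt (x := p)).isSymmSndFDerivAt (by simp)
    simpa using this.eq (1, 0) (0, 1)
  have e1 := ib (1, 0) (0, 1)
  have e2 := ib (0, 1) (1, 0)
  simp only [s] at e1
  linarith

/-- `u` viewed with values in Euclidean space. -/
noncomputable def tE (u : ℝ × ℝ → Fin 3 → ℝ) (p : ℝ × ℝ) : E3 := WithLp.toLp 2 (u p)

/-- The normal `u_x ∧ u_y`. -/
noncomputable def nrm (u : ℝ × ℝ → Fin 3 → ℝ) (p : ℝ × ℝ) : Fin 3 → ℝ :=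
  crossProduct (pderivX u p) (pderivY u p)

theorem lin_expand (L : E3 →L[ℝ] ℝ) (z : E3) :
    L z = ∑ i, z i * L (EuclideanSpace.single i 1) := by
  conv_lhs => rw [← (EuclideanSpace.basisFun (Fin 3) ℝ).sum_repr z]
  simp

theorem tE_contDiff {u : ℝ × ℝ → Fin 3 → ℝ} {n : WithTop ℕ∞} (hu : ContDiff ℝ n u) : ContDiff ℝ n (tE u) := by
  unfold tE
  exact (PiLp.continuousLinearEquiv 2 ℝ (fun _ : Fin 3 => ℝ)).symm.contDiff.comp hu

theorem tE_fderiv {u : ℝ × ℝ → Fin 3 → ℝ} (hu : ContDiff ℝ 1 u) (p w : ℝ × ℝ) :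
    fderiv ℝ (tE u) p w = WithLp.toLp 2 (fderiv ℝ u p w) := by
  have := ((PiLp.continuousLinearEquiv 2 ℝ (fun _ : Fin 3 => ℝ)).symm.toContinuousLinearMap.hasFDerivAt).comp p
    (hu.differentiable (by norm_num) p).hasFDerivAt
  have h2 : HasFDerivAt (tE u) _ p := this
  rw [h2.fderiv]; rfl

theorem comp_fderiv {u : ℝ × ℝ → Fin 3 → ℝ} (hu : ContDiff ℝ 1 u) (i : Fin 3) (p w : ℝ × ℝ) :
    fderiv ℝ (fun p => u p i) p w = fderiv ℝ u p w i := by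
  have h : HasFDerivAt (fun p => u p i) ((ContinuousLinearMap.proj (R := ℝ) (φ := fun _ : Fin 3 => ℝ) i).comp (fderiv ℝ u p)) p :=
    (ContinuousLinearMap.proj (R := ℝ) (φ := fun _ : Fin 3 => ℝ) i).hasFDerivAt.comp p
      (hu.differentiable (by norm_num) p).hasFDerivAt
  rw [h.fderiv]; rfl

theorem ibp_main {u : ℝ × ℝ → Fin 3 → ℝ} (hu : ContDiff ℝ 2 u) (hc : HasCompactSupport u)
    {ψ : E3 → ℝ} (hψ : ContDiff ℝ 1 ψ) (v : E3) (t : ℝ) :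
    ∫ p, (2 * ψ (t • tE u p) * dot3 v (nrm u p)
      + t * (fderiv ℝ ψ (t • tE u p) (tE u p) * dot3 v (nrm u p)
      - fderiv ℝ ψ (t • tE u p) v * dot3 (u p) (nrm u p))) = 0 := by
  have hu1 : ContDiff ℝ 1 u := hu.of_le (by norm_num)
  have ht1 := tE_contDiff hu1
  let Ψ : ℝ × ℝ → ℝ := fun p => ψ (t • tE u p)
  have hΨ : ContDiff ℝ 1 Ψ := hψ.comp (ht1.const_smul t)
  have hΨd : ∀ p w, fderiv ℝ Ψ p w = t * ∑ k, fderiv ℝ u p w k *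
      fderiv ℝ ψ (t • tE u p) (EuclideanSpace.single k 1) := by
    intro p w
    have h1 : HasFDerivAt (fun p => t • tE u p) (t • fderiv ℝ (tE u) p) p :=
      (ht1.differentiable (by norm_num) p).hasFDerivAt.const_smul t
    have h2 := ((hψ.differentiable (by norm_num) (t • tE u p)).hasFDerivAt).comp p h1
    have h3 : HasFDerivAt Ψ _ p := h2
    rw [h3.fderiv]
    simp only [ContinuousLinearMap.comp_apply, ContinuousLinearMap.smul_apply, map_smul, smul_eq_mul,
      tE_fderiv hu1]
    rw [lin_expand]
  have hui : ∀ i, ContDiff ℝ 2 (fun p => u p i) := fun i => contDiff_pi.1 hu i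
  have hci : ∀ i, HasCompactSupport (fun p => u p i) := fun i => hc.comp_left (g := fun x : Fin 3 → ℝ => x i) rfl
  have hF : ∀ i, ContDiff ℝ 1 (fun p => Ψ p * u p i) := fun i => hΨ.mul ((hui i).of_le (by norm_num))
  have hFc : ∀ i, HasCompactSupport (fun p => Ψ p * u p i) := fun i => (hci i).mul_left
  let Q : Fin 3 → Fin 3 → ℝ × ℝ → ℝ := fun i j p =>
    fderiv ℝ (fun p => Ψ p * u p i) p (1, 0) * fderiv ℝ (fun p => u p j) p (0, 1)
      - fderiv ℝ (fun p => Ψ p * u p i) p (0, 1) * fderiv ℝ (fun p => u p j) p (1, 0)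
  have hQ0 : ∀ i j, ∫ p, Q i j p = 0 := fun i j => ibp_pair (hF i) (hFc i) (hui j)
  have hQi : ∀ i j, Integrable (Q i j) := by
    intro i j
    have a1 : ∀ w : ℝ × ℝ, Continuous fun p => fderiv ℝ (fun p => Ψ p * u p i) p w := fun w =>
      ((hF i).continuous_fderiv (by norm_num)).clm_apply continuous_const
    have a2 : ∀ w : ℝ × ℝ, Continuous fun p => fderiv ℝ (fun p => u p j) p w := fun w =>
      ((hui j).continuous_fderiv (by norm_num)).clm_apply continuous_const
    have a3 : ∀ w : ℝ × ℝ, HasCompactSupport fun p => fderiv ℝ (fun p => Ψ p * u p i) p w := fun w =>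
      (hFc i).fderiv_apply ℝ w
    exact (((a1 _).mul (a2 _)).integrable_of_hasCompactSupport (a3 _).mul_right).sub
      (((a1 _).mul (a2 _)).integrable_of_hasCompactSupport (a3 _).mul_right)
  let ε : Fin 3 → Fin 3 → ℝ := ![![0, v 2, -v 1], ![-v 2, 0, v 0], ![v 1, -v 0, 0]]
  have hsum : ∫ p, ∑ i, ∑ j, ε i j * Q i j p = 0 := by
    rw [integral_finsetSum _ fun i _ => integrable_finsetSum _ fun j _ => (hQi i j).const_mul _]
    refine Finset.sum_eq_zero fun i _ => ?_
    rw [integral_finsetSum _ fun j _ => (hQi i j).const_mul _]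
    refine Finset.sum_eq_zero fun j _ => ?_
    rw [integral_const_mul, hQ0, mul_zero]
  rw [← hsum]
  congr 1
  ext p
  have hprod : ∀ i w, fderiv ℝ (fun p => Ψ p * u p i) p w =
      Ψ p * fderiv ℝ u p w i + fderiv ℝ Ψ p w * u p i := by
    intro i w
    rw [fderiv_fun_mul (hΨ.differentiable (by norm_num) p) ((hui i).differentiable (by norm_num) p)]
    simp [comp_fderiv hu1]
    ring
  simp only [Q, hprod, hΨd, comp_fderiv hu1]
  rw [lin_expand _ v, lin_expand _ (tE u p)]
  simp only [Fin.sum_univ_three, dot3, nrm, cross_apply, pderivX, pderivY, tE, Ψ, ε]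
  simp
  ring

open MeasureTheory Real Filter
open scoped Pointwise

/-- Splitting off the third coordinate. -/
noncomputable def TT : E3 ≃ᵐ ℝ × (ℝ × ℝ) :=
  (MeasurableEquiv.toLp 2 (Fin 3 → ℝ)).symm.trans
    ((MeasurableEquiv.piFinSuccAbove (fun _ : Fin 3 => ℝ) 2).trans
      (MeasurableEquiv.prodCongr (MeasurableEquiv.refl ℝ) MeasurableEquiv.finTwoArrow))

theorem TT_apply (q : E3) : TT q = (q 2, (q 0, q 1)) := by
  rfl

theorem TT_mp : MeasurePreserving (TT : E3 → ℝ × (ℝ × ℝ)) volume volume := by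
  have h1 : MeasurePreserving (MeasurableEquiv.toLp 2 (Fin 3 → ℝ)).symm volume volume :=
    PiLp.volume_preserving_ofLp (Fin 3)
  have h2 := volume_preserving_piFinSuccAbove (fun _ : Fin 3 => ℝ) 2
  have h3 : MeasurePreserving (MeasurableEquiv.prodCongr (MeasurableEquiv.refl ℝ) (MeasurableEquiv.finTwoArrow (α := ℝ)))
      (volume : Measure (ℝ × (Fin 2 → ℝ))) volume :=
    (MeasurePreserving.id volume).prod (volume_preserving_finTwoArrow ℝ)
  exact h3.comp (h2.comp h1)

/-- The slab. -/
def slab : Set E3 := {q | 0 < q 2 ∧ q 2 < 1}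

theorem slab_meas : MeasurableSet slab := by
  have : slab = TT ⁻¹' (Set.Ioo (0:ℝ) 1 ×ˢ Set.univ) := by
    ext q; simp [slab, TT_apply]
  rw [this]
  exact TT.measurable (measurableSet_Ioo.prod MeasurableSet.univ)

/-- measure on slab -/
noncomputable def muS : Measure (ℝ × (ℝ × ℝ)) := (volume.restrict (Set.Ioo (0:ℝ) 1)).prod volume

theorem muS_eq : muS = volume.restrict (Set.Ioo (0:ℝ) 1 ×ˢ (Set.univ : Set (ℝ × ℝ))) := by
  rw [muS, Measure.volume_eq_prod (α := ℝ) (β := ℝ × ℝ), ← Measure.prod_restrict, Measure.restrict_univ]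

theorem slab_mp : MeasurePreserving (TT : E3 → ℝ × (ℝ × ℝ)) (volume.restrict slab) muS := by
  have hs : slab = TT ⁻¹' (Set.Ioo (0:ℝ) 1 ×ˢ Set.univ) := by
    ext q; simp [slab, TT_apply]
  have h := TT_mp.restrict_preimage (s := Set.Ioo (0:ℝ) 1 ×ˢ Set.univ) (measurableSet_Ioo.prod MeasurableSet.univ)
  rw [← hs] at h
  rw [muS_eq]; exact h

theorem slab_int (F : ℝ × (ℝ × ℝ) → ℝ) : ∫ q in slab, F (q 2, (q 0, q 1)) = ∫ z, F z ∂muS :=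
  slab_mp.integral_comp TT.measurableEmbedding F

theorem slab_intble {F : ℝ × (ℝ × ℝ) → ℝ} (h : Integrable F muS) :
    IntegrableOn (fun q : E3 => F (q 2, (q 0, q 1))) slab :=
  (slab_mp.integrable_comp_emb TT.measurableEmbedding).2 h

theorem muS_intble {F : ℝ × (ℝ × ℝ) → ℝ} (hF : Continuous F) {K : Set (ℝ × ℝ)} (hK : IsCompact K)
    (h0 : ∀ t p, p ∉ K → F (t, p) = 0) : Integrable F muS := by
  have hi : IntegrableOn F (Set.Icc (0:ℝ) 1 ×ˢ K) volume :=
    hF.continuousOn.integrableOn_compact (isCompact_Icc.prod hK)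
  have h2 : IntegrableOn F (Set.Icc (0:ℝ) 1 ×ˢ Set.univ) volume := by
    refine hi.of_forall_sdiff_eq_zero (measurableSet_Icc.prod MeasurableSet.univ) ?_
    rintro ⟨t, p⟩ ⟨⟨h1, _⟩, h2⟩
    exact h0 t p fun hp => h2 ⟨h1, hp⟩
  rw [muS_eq]
  exact h2.mono_set (Set.prod_mono Set.Ioo_subset_Icc_self le_rfl)

/-- The cone map. -/
noncomputable def cone (u : ℝ × ℝ → Fin 3 → ℝ) (q : E3) : E3 := q 2 • tE u (q 0, q 1)

theorem cone_contDiff {u : ℝ × ℝ → Fin 3 → ℝ} (hu : ContDiff ℝ 1 u) : ContDiff ℝ 1 (cone u) := by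
  have c : ∀ i : Fin 3, ContDiff ℝ 1 (fun q : E3 => q i) := fun i => by fun_prop
  exact (c 2).smul ((tE_contDiff hu).comp ((c 0).prodMk (c 1)))

theorem cone_fderiv {u : ℝ × ℝ → Fin 3 → ℝ} (hu : ContDiff ℝ 1 u) (q w : E3) :
    fderiv ℝ (cone u) q w = q 2 • WithLp.toLp 2 (fderiv ℝ u (q 0, q 1) (w 0, w 1)) + w 2 • tE u (q 0, q 1) := by
  have c : ∀ i : Fin 3, HasFDerivAt (fun q : E3 => q i) (EuclideanSpace.proj i : E3 →L[ℝ] ℝ) q := fun i =>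
    (EuclideanSpace.proj i : E3 →L[ℝ] ℝ).hasFDerivAt
  have hp := (c 0).prodMk (c 1)
  have h1 := (((tE_contDiff hu).differentiable (by norm_num) (q 0, q 1)).hasFDerivAt).comp q hp
  have h2 := (c 2).smul h1
  have h3 : HasFDerivAt (cone u) _ q := h2
  rw [h3.fderiv]
  simp [tE_fderiv hu]

theorem cone_det {u : ℝ × ℝ → Fin 3 → ℝ} (hu : ContDiff ℝ 1 u) (q : E3) :
    (fderiv ℝ (cone u) q).det = (q 2) ^ 2 * dot3 (u (q 0, q 1)) (nrm u (q 0, q 1)) := by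
  have h : (fderiv ℝ (cone u) q).det = LinearMap.det (fderiv ℝ (cone u) q : E3 →ₗ[ℝ] E3) := rfl
  rw [h, ← LinearMap.det_toMatrix (EuclideanSpace.basisFun (Fin 3) ℝ).toBasis, Matrix.det_fin_three]
  simp only [LinearMap.toMatrix_apply, OrthonormalBasis.coe_toBasis, EuclideanSpace.basisFun_apply,
    OrthonormalBasis.coe_toBasis_repr_apply, EuclideanSpace.basisFun_repr, ContinuousLinearMap.coe_coe,
    cone_fderiv hu]
  have hz : fderiv ℝ u (q 0, q 1) (0, 0) = 0 := map_zero _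
  simp [dot3, nrm, cross_apply, pderivX, pderivY, tE, Fin.sum_univ_three, hz]
  ring

theorem nrm_cont {u : ℝ × ℝ → Fin 3 → ℝ} (hu1 : ContDiff ℝ 1 u) : Continuous (nrm u) := by
  have hfd : Continuous (fderiv ℝ u) := hu1.continuous_fderiv (by norm_num)
  have a : ∀ w : ℝ × ℝ, Continuous fun p => fderiv ℝ u p w := fun w => hfd.clm_apply continuous_const
  have a' : ∀ (w : ℝ × ℝ) i, Continuous fun p => fderiv ℝ u p w i := fun w i => (continuous_apply i).comp (a w)
  unfold nrm pderivX pderivY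
  simp only [cross_apply]
  refine continuous_pi fun i => ?_
  fin_cases i <;> simp <;> exact ((a' _ _).mul (a' _ _)).sub ((a' _ _).mul (a' _ _))

theorem fderiv_zero_off {u : ℝ × ℝ → Fin 3 → ℝ} {p : ℝ × ℝ} (hp : p ∉ tsupport u) : fderiv ℝ u p = 0 := by
  by_contra h
  exact hp (support_fderiv_subset ℝ h)

theorem nrm_zero {u : ℝ × ℝ → Fin 3 → ℝ} {p : ℝ × ℝ} (hp : p ∉ tsupport u) : nrm u p = 0 := by
  simp [nrm, pderivX, pderivY, fderiv_zero_off hp]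

theorem cone_int {u : ℝ × ℝ → Fin 3 → ℝ} (hu : ContDiff ℝ 2 u) (hc : HasCompactSupport u)
    {ψ : E3 → ℝ} (hψ : ContDiff ℝ 1 ψ) (v : E3) :
    ∫ q in slab, (fderiv ℝ (cone u) q).det * fderiv ℝ ψ (cone u q) v
      = ∫ p, ψ (tE u p) * dot3 v (nrm u p) := by
  have hu1 : ContDiff ℝ 1 u := hu.of_le (by norm_num)
  have hK : IsCompact (tsupport u) := hc
  have hnc := nrm_cont hu1
  have hn0 : ∀ p, p ∉ tsupport u → nrm u p = 0 := fun p => nrm_zero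
  have hd : ∀ a : ℝ × ℝ → Fin 3 → ℝ, Continuous a → Continuous fun p => dot3 (a p) (nrm u p) := by
    intro a ha
    unfold dot3
    exact continuous_finsetSum _ fun i _ => ((continuous_apply i).comp ha).mul ((continuous_apply i).comp hnc)
  have hd0 : ∀ a : Fin 3 → ℝ, ∀ p, p ∉ tsupport u → dot3 a (nrm u p) = 0 := by
    intro a p hp; simp [dot3, hn0 p hp]
  have hvn := hd (fun _ => v) continuous_const
  have hun := hd u hu.continuous
  have htE : Continuous (tE u) := (tE_contDiff hu1).continuous
  have hψd : Continuous (fderiv ℝ ψ) := hψ.continuous_fderiv (by norm_num)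
  let h : ℝ × (ℝ × ℝ) → ℝ := fun z => z.1 ^ 2 * dot3 (u z.2) (nrm u z.2) * fderiv ℝ ψ (z.1 • tE u z.2) v
  let k : ℝ × (ℝ × ℝ) → ℝ := fun z => 2 * z.1 * ψ (z.1 • tE u z.2) * dot3 v (nrm u z.2)
    + z.1 ^ 2 * (fderiv ℝ ψ (z.1 • tE u z.2) (tE u z.2) * dot3 v (nrm u z.2))
  have hst : Continuous fun z : ℝ × (ℝ × ℝ) => z.1 • tE u z.2 := continuous_fst.smul (htE.comp continuous_snd)
  have hh : Continuous h :=
    ((continuous_fst.pow 2).mul (hun.comp continuous_snd)).mul ((hψd.comp hst).clm_apply continuous_const)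
  have hk : Continuous k :=
    (((continuous_const.mul continuous_fst).mul (hψ.continuous.comp hst)).mul (hvn.comp continuous_snd)).add
      ((continuous_fst.pow 2).mul (((hψd.comp hst).clm_apply (htE.comp continuous_snd)).mul (hvn.comp continuous_snd)))
  have ih : Integrable h muS := muS_intble hh hK fun t p hp => by simp [h, hd0 _ p hp]
  have ik : Integrable k muS := muS_intble hk hK fun t p hp => by simp [k, hd0 _ p hp]
  have e1 : ∫ q in slab, (fderiv ℝ (cone u) q).det * fderiv ℝ ψ (cone u q) v = ∫ z, h z ∂muS := by
    rw [← slab_int]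
    simp only [cone_det hu1, h, cone]
  have e2 : ∫ z, h z ∂muS = ∫ z, k z ∂muS := by
    have := ih; have := ik
    unfold muS at *
    rw [integral_prod _ ih, integral_prod _ ik]
    congr 1
    ext t
    have hb := ibp_main hu hc hψ v t
    have it : ∀ {f : ℝ × (ℝ × ℝ) → ℝ}, Continuous f → (∀ p, p ∉ tsupport u → f (t, p) = 0) →
        Integrable fun p => f (t, p) := fun hf h0 =>
      (hf.comp (Continuous.prodMk_right t)).integrable_of_hasCompactSupport
        (HasCompactSupport.intro hK h0)
    have i1 := it hh fun p hp => by simp [h, hd0 _ p hp]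
    have i2 := it hk fun p hp => by simp [k, hd0 _ p hp]
    rw [← sub_eq_zero, ← integral_sub i1 i2]
    have : ∫ p, (h (t, p) - k (t, p)) = - t * ∫ p, (2 * ψ (t • tE u p) * dot3 v (nrm u p)
      + t * (fderiv ℝ ψ (t • tE u p) (tE u p) * dot3 v (nrm u p)
      - fderiv ℝ ψ (t • tE u p) v * dot3 (u p) (nrm u p))) := by
      rw [← integral_const_mul]
      congr 1
      ext p
      simp only [h, k]
      ring
    rw [this, hb, mul_zero]
  have e3 : ∫ z, k z ∂muS = ∫ p, ψ (tE u p) * dot3 v (nrm u p) := by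
    unfold muS at *
    rw [integral_prod_symm _ ik]
    congr 1
    ext p
    have hder : ∀ t ∈ Set.uIcc (0:ℝ) 1, HasDerivAt (fun t => t ^ 2 * ψ (t • tE u p) * dot3 v (nrm u p)) (k (t, p)) t := by
      intro t _
      have a1 : HasDerivAt (fun t : ℝ => t • tE u p) (tE u p) t := by
        simpa using (hasDerivAt_id t).smul_const (tE u p)
      have a2 := ((hψ.differentiable (by norm_num) (t • tE u p)).hasFDerivAt).comp_hasDerivAt t a1
      have a3 := (((hasDerivAt_pow 2 t).mul a2).mul_const (dot3 v (nrm u p)))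
      refine a3.congr_deriv ?_
      simp [k]
      ring
    have hkc : Continuous fun t => k (t, p) := hk.comp (Continuous.prodMk_left p)
    have := intervalIntegral.integral_eq_sub_of_hasDerivAt hder (hkc.intervalIntegrable 0 1)
    rw [intervalIntegral.integral_of_le zero_le_one, integral_Ioc_eq_integral_Ioo] at this
    rw [this]
    simp
  rw [e1, e2, e3]

theorem cone_det_int {u : ℝ × ℝ → Fin 3 → ℝ} (hu : ContDiff ℝ 2 u) (hc : HasCompactSupport u) :
    IntegrableOn (fun q => (fderiv ℝ (cone u) q).det) slab ∧
    ∫ q in slab, (fderiv ℝ (cone u) q).det = (1 / 3) * ∫ p, dot3 (u p) (nrm u p) := by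
  have hu1 : ContDiff ℝ 1 u := hu.of_le (by norm_num)
  have hK : IsCompact (tsupport u) := hc
  have hun : Continuous fun p => dot3 (u p) (nrm u p) := by
    unfold dot3
    exact continuous_finsetSum _ fun i _ => ((continuous_apply i).comp hu.continuous).mul
      ((continuous_apply i).comp (nrm_cont hu1))
  let h : ℝ × (ℝ × ℝ) → ℝ := fun z => z.1 ^ 2 * dot3 (u z.2) (nrm u z.2)
  have hh : Continuous h := (continuous_fst.pow 2).mul (hun.comp continuous_snd)
  have ih : Integrable h muS := muS_intble hh hK fun t p hp => by simp [h, dot3, nrm_zero hp]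
  have e : (fun q => (fderiv ℝ (cone u) q).det) = fun q : E3 => h (q 2, (q 0, q 1)) := by
    ext q; simp only [cone_det hu1, h]
  rw [e]
  refine ⟨slab_intble ih, ?_⟩
  rw [slab_int]
  simp only [h, muS]
  rw [integral_prod_mul (fun t : ℝ => t ^ 2) (fun p => dot3 (u p) (nrm u p))]
  congr 1
  rw [← integral_Ioc_eq_integral_Ioo, ← intervalIntegral.integral_of_le zero_le_one]
  simp
  norm_num

open MeasureTheory Real Filter
open scoped Pointwise

/-- gradient density -/
noncomputable def gdens (u : ℝ × ℝ → Fin 3 → ℝ) (p : ℝ × ℝ) : ℝ :=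
  dot3 (pderivX u p) (pderivX u p) + dot3 (pderivY u p) (pderivY u p)

theorem dot3_le (v : E3) (n : Fin 3 → ℝ) : |dot3 v n| ≤ ‖(WithLp.toLp 2 n : E3)‖ * ‖v‖ := by
  have : dot3 v n = inner ℝ (WithLp.toLp 2 n : E3) v := by
    simp [dot3, PiLp.inner_apply]
  rw [this]
  exact abs_real_inner_le_norm _ _

theorem nrm_le (u : ℝ × ℝ → Fin 3 → ℝ) (p : ℝ × ℝ) :
    ‖(WithLp.toLp 2 (nrm u p) : E3)‖ ≤ gdens u p / 2 := by
  have key : ∀ a b : Fin 3 → ℝ, ‖(WithLp.toLp 2 (crossProduct a b) : E3)‖ ≤ (dot3 a a + dot3 b b) / 2 := by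
    intro a b
    rw [EuclideanSpace.norm_eq]
    refine Real.sqrt_le_iff.2 ⟨?_, ?_⟩
    · simp only [dot3, Fin.sum_univ_three]; nlinarith [sq_nonneg (a 0), sq_nonneg (a 1), sq_nonneg (a 2), sq_nonneg (b 0), sq_nonneg (b 1), sq_nonneg (b 2)]
    · simp only [dot3, Fin.sum_univ_three, cross_apply, Real.norm_eq_abs, sq_abs]
      simp
      nlinarith [sq_nonneg (a 0 * b 0 + a 1 * b 1 + a 2 * b 2),
        sq_nonneg (a 0 * a 0 + a 1 * a 1 + a 2 * a 2 - (b 0 * b 0 + b 1 * b 1 + b 2 * b 2))]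
  exact key _ _

theorem gdens_cont {u : ℝ × ℝ → Fin 3 → ℝ} (hu1 : ContDiff ℝ 1 u) : Continuous (gdens u) := by
  have hfd : Continuous (fderiv ℝ u) := hu1.continuous_fderiv (by norm_num)
  have a' : ∀ (w : ℝ × ℝ) i, Continuous fun p => fderiv ℝ u p w i := fun w i =>
    (continuous_apply i).comp (hfd.clm_apply continuous_const)
  unfold gdens dot3 pderivX pderivY
  exact (continuous_finsetSum _ fun i _ => (a' _ _).mul (a' _ _)).add
    (continuous_finsetSum _ fun i _ => (a' _ _).mul (a' _ _))

theorem gdens_nonneg (u : ℝ × ℝ → Fin 3 → ℝ) (p : ℝ × ℝ) : 0 ≤ gdens u p := by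
  unfold gdens dot3
  exact add_nonneg (Finset.sum_nonneg fun i _ => mul_self_nonneg _) (Finset.sum_nonneg fun i _ => mul_self_nonneg _)

theorem gdens_int {u : ℝ × ℝ → Fin 3 → ℝ} (hu1 : ContDiff ℝ 1 u) (hc : HasCompactSupport u) :
    Integrable (gdens u) :=
  (gdens_cont hu1).integrable_of_hasCompactSupport (HasCompactSupport.intro (K := tsupport u) hc fun p hp => by
    simp [gdens, dot3, pderivX, pderivY, fderiv_zero_off hp])

open scoped Convolution in
theorem conv_deriv {ρ w : E3 → ℝ} (hρ : ContDiff ℝ 1 ρ) (hρc : HasCompactSupport ρ) (hw : Integrable w) (y v : E3) :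
    fderiv ℝ (ρ ⋆[ContinuousLinearMap.lsmul ℝ ℝ, volume] w) y v = ∫ z, w z * fderiv ℝ ρ (y - z) v := by
  rw [(hρc.hasFDerivAt_convolution_left (ContinuousLinearMap.lsmul ℝ ℝ) hρ hw.locallyIntegrable y).fderiv]
  have hex := (hρc.fderiv ℝ).convolutionExists_left ((ContinuousLinearMap.lsmul ℝ ℝ).precompL E3)
    (hρ.continuous_fderiv (by norm_num)) hw.locallyIntegrable y
  rw [convolution_eq_swap]
  have hex2 := hex.integrable_swap
  rw [ContinuousLinearMap.integral_apply hex2]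
  congr 1
  ext z
  simp [ContinuousLinearMap.precompL_apply, mul_comm]

open scoped Convolution in
theorem mollify_bound {u : ℝ × ℝ → Fin 3 → ℝ} (hu : ContDiff ℝ 2 u) (hc : HasCompactSupport u)
    {w : E3 → ℝ} (hw : Integrable w)
    (hdeg : ∀ φ : E3 → ℝ, Continuous φ → (∃ C, ∀ y, |φ y| ≤ C) →
        ∫ x in slab, (fderiv ℝ (cone u) x).det * φ (cone u x) = ∫ y, w y * φ y)
    (φ : ContDiffBump (0 : E3)) :
    ∫⁻ y, ‖fderiv ℝ (φ.normed volume ⋆[ContinuousLinearMap.lsmul ℝ ℝ, volume] w) y‖ₑ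
      ≤ ENNReal.ofReal ((∫ p, gdens u p) / 2) := by
  have hu1 : ContDiff ℝ 1 u := hu.of_le (by norm_num)
  set ρ : E3 → ℝ := φ.normed volume with hρdef
  have hρ : ContDiff ℝ 1 ρ := φ.contDiff_normed
  have hρc : HasCompactSupport ρ := φ.hasCompactSupport_normed
  have hρ0 : ∀ x, 0 ≤ ρ x := fun x => φ.nonneg_normed x
  have hρ1 : ∫⁻ y, ENNReal.ofReal (ρ y) = 1 := by
    rw [← ofReal_integral_eq_lintegral_ofReal φ.integrable_normed (ae_of_all _ hρ0), φ.integral_normed]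
    simp
  have htE : Continuous (tE u) := (tE_contDiff hu1).continuous
  have hN : Continuous fun p => ‖(WithLp.toLp 2 (nrm u p) : E3)‖ :=
    ((PiLp.continuous_toLp 2 (fun _ : Fin 3 => ℝ)).comp (nrm_cont hu1)).norm
  have hder : ∀ y v : E3, fderiv ℝ (ρ ⋆[ContinuousLinearMap.lsmul ℝ ℝ, volume] w) y v
      = - ∫ p, ρ (y - tE u p) * dot3 v (nrm u p) := by
    intro y v
    rw [conv_deriv hρ hρc hw]
    have hψ : ContDiff ℝ 1 (fun z => ρ (y - z)) := hρ.comp (contDiff_const.sub contDiff_id)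
    have hψd : ∀ z, fderiv ℝ (fun z => ρ (y - z)) z v = - fderiv ℝ ρ (y - z) v := by
      intro z
      have h1 : HasFDerivAt (fun z : E3 => y - z) (-ContinuousLinearMap.id ℝ E3) z :=
        (hasFDerivAt_id z).const_sub y
      have h2 := ((hρ.differentiable (by norm_num) (y - z)).hasFDerivAt).comp z h1
      have h3 : HasFDerivAt (fun z => ρ (y - z)) _ z := h2
      rw [h3.fderiv]
      simp
    rw [← cone_int hu hc hψ v]
    simp only [hψd]
    have hcont : Continuous fun z => fderiv ℝ ρ z v := (hρ.continuous_fderiv (by norm_num)).clm_apply continuous_const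
    obtain ⟨C, hC⟩ := hcont.bounded_above_of_compact_support (hρc.fderiv_apply ℝ v)
    rw [← hdeg (fun z => fderiv ℝ ρ (y - z) v) (hcont.comp (continuous_const.sub continuous_id))
      ⟨C, fun z => by simpa using hC (y - z)⟩]
    rw [← integral_neg]
    congr 1
    ext z
    ring
  have hcs : ∀ y, Continuous fun p => ρ (y - tE u p) * ‖(WithLp.toLp 2 (nrm u p) : E3)‖ := fun y =>
    (hρ.continuous.comp (continuous_const.sub htE)).mul hN
  have hZint : ∀ y, Integrable fun p => ρ (y - tE u p) * ‖(WithLp.toLp 2 (nrm u p) : E3)‖ := fun y =>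
    (hcs y).integrable_of_hasCompactSupport (HasCompactSupport.intro (K := tsupport u) hc fun p hp => by
      simp [nrm_zero hp])
  have hb : ∀ y, ‖fderiv ℝ (ρ ⋆[ContinuousLinearMap.lsmul ℝ ℝ, volume] w) y‖ₑ
      ≤ ∫⁻ p, ENNReal.ofReal (ρ (y - tE u p)) * ENNReal.ofReal ‖(WithLp.toLp 2 (nrm u p) : E3)‖ := by
    intro y
    have hnn : ∀ p, 0 ≤ ρ (y - tE u p) * ‖(WithLp.toLp 2 (nrm u p) : E3)‖ := fun p =>
      mul_nonneg (hρ0 _) (norm_nonneg _)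
    have h1 : ‖fderiv ℝ (ρ ⋆[ContinuousLinearMap.lsmul ℝ ℝ, volume] w) y‖
        ≤ ∫ p, ρ (y - tE u p) * ‖(WithLp.toLp 2 (nrm u p) : E3)‖ := by
      refine ContinuousLinearMap.opNorm_le_bound _ (integral_nonneg hnn) fun v => ?_
      rw [hder, norm_neg, ← integral_mul_const]
      refine norm_integral_le_of_norm_le ((hZint y).mul_const _) (ae_of_all _ fun p => ?_)
      rw [norm_mul, Real.norm_eq_abs, Real.norm_eq_abs, abs_of_nonneg (hρ0 _), mul_assoc]
      exact mul_le_mul_of_nonneg_left (dot3_le v _) (hρ0 _)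
    rw [← ofReal_norm]
    refine (ENNReal.ofReal_le_ofReal h1).trans ?_
    rw [ofReal_integral_eq_lintegral_ofReal (hZint y) (ae_of_all _ hnn)]
    exact le_of_eq (lintegral_congr fun p => ENNReal.ofReal_mul (hρ0 _))
  calc _ ≤ ∫⁻ y, ∫⁻ p, ENNReal.ofReal (ρ (y - tE u p)) * ENNReal.ofReal ‖(WithLp.toLp 2 (nrm u p) : E3)‖ :=
        lintegral_mono hb
    _ = ∫⁻ p, ∫⁻ y, ENNReal.ofReal (ρ (y - tE u p)) * ENNReal.ofReal ‖(WithLp.toLp 2 (nrm u p) : E3)‖ := by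
        have m1 : Measurable fun z : E3 × (ℝ × ℝ) => ENNReal.ofReal (ρ (z.1 - tE u z.2)) :=
          (ENNReal.continuous_ofReal.comp (hρ.continuous.comp
            (continuous_fst.sub (htE.comp continuous_snd)))).measurable
        have m2 : Measurable fun z : E3 × (ℝ × ℝ) => ENNReal.ofReal ‖(WithLp.toLp 2 (nrm u z.2) : E3)‖ :=
          (ENNReal.continuous_ofReal.comp (hN.comp continuous_snd)).measurable
        exact lintegral_lintegral_swap (m1.mul m2).aemeasurable
    _ = ∫⁻ p, ENNReal.ofReal ‖(WithLp.toLp 2 (nrm u p) : E3)‖ := by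
        refine lintegral_congr fun p => ?_
        rw [lintegral_mul_const _ (by exact (ENNReal.continuous_ofReal.comp (hρ.continuous.comp (continuous_id.sub continuous_const))).measurable)]
        rw [lintegral_sub_right_eq_self (fun y => ENNReal.ofReal (ρ y)), hρ1, one_mul]
    _ ≤ ∫⁻ p, ENNReal.ofReal (gdens u p / 2) := lintegral_mono fun p => ENNReal.ofReal_le_ofReal (nrm_le u p)
    _ = ENNReal.ofReal ((∫ p, gdens u p) / 2) := by
        rw [← integral_div, ofReal_integral_eq_lintegral_ofReal ((gdens_int hu1 hc).div_const 2)
          (ae_of_all _ fun p => by have := gdens_nonneg u p; positivity)]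

theorem iso_pos {u : ℝ × ℝ → Fin 3 → ℝ} (hu : ContDiff ℝ 2 u) (hc : HasCompactSupport u)
    (hV : 0 < ∫ p, dot3 (u p) (nrm u p)) :
    32 * π * (∫ p, dot3 (u p) (nrm u p)) ^ 2 ≤ (∫ p, gdens u p) ^ 3 := by
  have hu1 : ContDiff ℝ 1 u := hu.of_le (by norm_num)
  have hU := cone_contDiff hu1
  obtain ⟨hi, hv⟩ := cone_det_int hu hc
  obtain ⟨w, hw, hk, h0, hdeg⟩ := degree_exists
    (fun x => (hU.differentiable (by norm_num) x).hasFDerivAt) (hU.continuous_fderiv (by norm_num)) slab_meas hi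
  set V := ∫ p, dot3 (u p) (nrm u p)
  set A := ∫ p, gdens u p
  have hA0 : 0 ≤ A := integral_nonneg (gdens_nonneg u)
  have hwV : ∫ y, w y = V / 3 := by
    have := hdeg (fun _ => 1) continuous_const ⟨1, fun _ => by simp⟩
    simp only [mul_one] at this
    rw [← this, hv]; ring
  have htE : Continuous (tE u) := (tE_contDiff hu1).continuous
  have htc : HasCompactSupport (tE u) := hc.comp_left (g := fun x : Fin 3 → ℝ => (WithLp.toLp 2 x : E3)) rfl
  obtain ⟨C, hC⟩ := htE.bounded_above_of_compact_support htc
  have hwc : HasCompactSupport w := by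
    refine HasCompactSupport.intro (isCompact_closedBall (0 : E3) C) fun y hy => h0 y ?_
    rintro ⟨q, hq, rfl⟩
    apply hy
    rw [mem_closedBall_zero_iff, cone, norm_smul, Real.norm_eq_abs, abs_of_pos hq.1]
    have := hC (q 0, q 1)
    nlinarith [norm_nonneg (tE u (q 0, q 1)), hq.1, hq.2]
  have key := iso_of_mollify hw hwc hk (mollify_bound hu hc hw hdeg)
  have h1 : ENNReal.ofReal (V / 3) ≤ ∫⁻ y, ENNReal.ofReal (w y) := by
    rw [← hwV]
    calc ENNReal.ofReal (∫ y, w y) ≤ ENNReal.ofReal (∫ y, max (w y) 0) :=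
          ENNReal.ofReal_le_ofReal (integral_mono hw hw.pos_part fun y => le_max_left _ _)
      _ = ∫⁻ y, ENNReal.ofReal (max (w y) 0) :=
          ofReal_integral_eq_lintegral_ofReal hw.pos_part (ae_of_all _ fun y => le_max_right _ _)
      _ = ∫⁻ y, ENNReal.ofReal (w y) := by
          refine lintegral_congr fun y => ?_
          simp [ENNReal.ofReal_max]
  have hb := bet_pos
  have h2 : ENNReal.ofReal (3 * bet * (V / 3) ^ (2 / 3 : ℝ)) ≤ ENNReal.ofReal (A / 2) := by
    refine le_trans ?_ key
    rw [ENNReal.ofReal_mul (by positivity), ← ENNReal.ofReal_rpow_of_nonneg (by positivity) (by norm_num)]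
    gcongr
  have h3 : 3 * bet * (V / 3) ^ (2 / 3 : ℝ) ≤ A / 2 := (ENNReal.ofReal_le_ofReal_iff (by positivity)).1 h2
  have h4 : (3 * bet * (V / 3) ^ (2 / 3 : ℝ)) ^ 3 ≤ (A / 2) ^ 3 :=
    pow_le_pow_left₀ (by positivity) h3 3
  have h5 : ((V / 3) ^ (2 / 3 : ℝ)) ^ 3 = (V / 3) ^ 2 := by
    rw [← Real.rpow_natCast, ← Real.rpow_mul (by positivity), ← Real.rpow_natCast]
    norm_num
  rw [mul_pow, mul_pow, bet_cube, h5] at h4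
  nlinarith [h4]

theorem smul_fderiv {u : ℝ × ℝ → Fin 3 → ℝ} (hu : ContDiff ℝ 1 u) (c : ℝ) (p : ℝ × ℝ) :
    fderiv ℝ (c • u) p = c • fderiv ℝ u p :=
  fderiv_const_smul (hu.differentiable (by norm_num) p) c

theorem gdens_smul {u : ℝ × ℝ → Fin 3 → ℝ} (hu : ContDiff ℝ 1 u) (c : ℝ) (p : ℝ × ℝ) :
    gdens (c • u) p = c ^ 2 * gdens u p := by
  simp only [gdens, dot3, pderivX, pderivY, smul_fderiv hu, Fin.sum_univ_three]
  simp
  ring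

theorem vdens_smul {u : ℝ × ℝ → Fin 3 → ℝ} (hu : ContDiff ℝ 1 u) (c : ℝ) (p : ℝ × ℝ) :
    dot3 ((c • u) p) (nrm (c • u) p) = c ^ 3 * dot3 (u p) (nrm u p) := by
  simp only [nrm, dot3, pderivX, pderivY, smul_fderiv hu, Fin.sum_univ_three, cross_apply]
  simp
  ring

theorem iso_all {u : ℝ × ℝ → Fin 3 → ℝ} (hu : ContDiff ℝ 2 u) (hc : HasCompactSupport u) :
    32 * π * (∫ p, dot3 (u p) (nrm u p)) ^ 2 ≤ (∫ p, gdens u p) ^ 3 := by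
  have hu1 : ContDiff ℝ 1 u := hu.of_le (by norm_num)
  have hA0 : 0 ≤ ∫ p, gdens u p := integral_nonneg (gdens_nonneg u)
  rcases lt_trichotomy (∫ p, dot3 (u p) (nrm u p)) 0 with h | h | h
  · have hu' : ContDiff ℝ 2 ((-1 : ℝ) • u) := hu.const_smul (-1 : ℝ)
    have hc' : HasCompactSupport ((-1 : ℝ) • u) := hc.comp_left (g := fun x : Fin 3 → ℝ => (-1 : ℝ) • x) (smul_zero _)
    have hv : ∫ p, dot3 (((-1 : ℝ) • u) p) (nrm ((-1 : ℝ) • u) p) = - ∫ p, dot3 (u p) (nrm u p) := by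
      simp only [vdens_smul hu1]
      rw [integral_const_mul]; ring
    have hg : ∫ p, gdens ((-1 : ℝ) • u) p = ∫ p, gdens u p := by
      simp only [gdens_smul hu1]
      rw [integral_const_mul]; ring
    have := iso_pos hu' hc' (by rw [hv]; linarith)
    rw [hv, hg, neg_sq] at this
    exact this
  · rw [h]; simp; positivity
  · exact iso_pos hu hc h

theorem dirEnergy_smul {u : ℝ × ℝ → Fin 3 → ℝ} (hu : ContDiff ℝ 1 u) (Ω : Set (ℝ × ℝ)) (c : ℝ) :
    dirEnergy Ω (c • u) = c ^ 2 * dirEnergy Ω u := by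
  have := fun p => gdens_smul hu c p
  unfold dirEnergy
  rw [← integral_const_mul]
  exact integral_congr_ae (ae_of_all _ this)

theorem vol_smul {u : ℝ × ℝ → Fin 3 → ℝ} (hu : ContDiff ℝ 1 u) (Ω : Set (ℝ × ℝ)) (c : ℝ) :
    vol Ω (c • u) = c ^ 3 * vol Ω u := by
  have := fun p => vdens_smul hu c p
  unfold vol
  rw [← integral_const_mul]
  exact integral_congr_ae (ae_of_all _ this)

theorem dirEnergy_eq {u : ℝ × ℝ → Fin 3 → ℝ} {Ω : Set (ℝ × ℝ)} (h : tsupport u ⊆ Ω) :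
    dirEnergy Ω u = ∫ p, gdens u p :=
  setIntegral_eq_integral_of_forall_compl_eq_zero fun p hp => by
    have := fderiv_zero_off (fun h' => hp (h h'))
    simp [dot3, pderivX, pderivY, this]

theorem vol_eq {u : ℝ × ℝ → Fin 3 → ℝ} {Ω : Set (ℝ × ℝ)} (h : tsupport u ⊆ Ω) :
    vol Ω u = ∫ p, dot3 (u p) (nrm u p) :=
  setIntegral_eq_integral_of_forall_compl_eq_zero fun p hp => by
    have := fderiv_zero_off (fun h' => hp (h h'))
    simp [dot3, pderivX, pderivY, this]

/-- Strict monotone decrease of the depth function on `[1, 3/2)`: for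
`1 < δ″ < δ′ < 3/2` and `u` on the δ″-Nehari manifold, the rescaled map
`v = (δ′/δ″)·u` lies on the δ′-Nehari manifold and
`E(u) − E(v) > (δ″ − 1)·r(δ″)²·(δ′/δ″ − 1)`. -/
theorem depth_strict_decrease (Ω : Set (ℝ × ℝ)) (hΩ : IsOpen Ω)
    (hΩb : Bornology.IsBounded Ω) (H : ℝ) (hH : 0 < H) (δ' δ'' : ℝ)
    (h0 : 1 < δ'') (h1 : δ'' < δ') (h2 : δ' < 3 / 2)
    (u : ℝ × ℝ → Fin 3 → ℝ) (hu : IsAdmissible Ω u)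
    (hne : dnorm Ω u ≠ 0) (hD : Dfun Ω H δ'' u = 0) :
    Dfun Ω H δ' ((δ' / δ'') • u) = 0 ∧ dnorm Ω ((δ' / δ'') • u) ≠ 0 ∧
    (δ'' - 1) * (rPW H δ'') ^ 2 * (δ' / δ'' - 1) <
      Efun Ω H u - Efun Ω H ((δ' / δ'') • u) := by
  obtain ⟨hsm, hcs, hsub⟩ := hu
  have hu2 : ContDiff ℝ 2 u := contDiff_infty.1 hsm 2
  have hu1 : ContDiff ℝ 1 u := hu2.of_le (by norm_num)
  have iso := iso_all hu2 hcs
  rw [← dirEnergy_eq hsub, ← vol_eq hsub] at iso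
  have hA0 : 0 ≤ dirEnergy Ω u := by
    rw [dirEnergy_eq hsub]; exact integral_nonneg (gdens_nonneg u)
  have hAne : dirEnergy Ω u ≠ 0 := fun h => hne (by simp [dnorm, h])
  have hdA := dirEnergy_smul hu1 Ω (δ' / δ'')
  have hdV := vol_smul hu1 Ω (δ' / δ'')
  unfold Dfun at hD ⊢
  unfold dnorm Efun rPW
  rw [hdA, hdV]
  generalize dirEnergy Ω u = A at *
  generalize vol Ω u = V at *
  have hA : 0 < A := lt_of_le_of_ne hA0 (Ne.symm hAne)
  have hd : 0 < δ'' := by linarith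
  have hs : 1 < δ' / δ'' := (one_lt_div hd).2 h1
  have hδ : δ' = (δ' / δ'') * δ'' := by field_simp
  generalize δ' / δ'' = s at *
  have hHV : H * V = -(δ'' * A) / 2 := by linarith
  have hr : (2 * √(2 * π) * δ'' / H) ^ 2 ≤ A := by
    rw [div_pow, mul_pow, mul_pow, Real.sq_sqrt (by positivity), div_le_iff₀ (by positivity)]
    have e : H ^ 2 * V ^ 2 = (δ'' * A) ^ 2 / 4 := by
      rw [← mul_pow, hHV]; ring
    have h3 : H ^ 2 * (32 * π * V ^ 2) ≤ H ^ 2 * A ^ 3 := mul_le_mul_of_nonneg_left iso (by positivity)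
    have h4 : A ^ 2 * (2 ^ 2 * (2 * π) * δ'' ^ 2) ≤ A ^ 2 * (A * H ^ 2) := by
      calc A ^ 2 * (2 ^ 2 * (2 * π) * δ'' ^ 2) = 32 * π * (H ^ 2 * V ^ 2) := by rw [e]; ring
        _ ≤ A ^ 2 * (A * H ^ 2) := by linarith
    exact le_of_mul_le_mul_left h4 (by positivity)
  refine ⟨?_, ?_, ?_⟩
  · rw [hδ]
    linear_combination s ^ 3 * hD
  · exact (Real.sqrt_pos.2 (by positivity)).ne'
  · have e : 1 / 2 * A + 2 * H / 3 * V - (1 / 2 * (s ^ 2 * A) + 2 * H / 3 * (s ^ 3 * V))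
        = A * ((s - 1) * (δ'' - 1) + (s - 1) ^ 2 * (δ'' - 1 / 2) + δ'' * (s - 1) ^ 3 / 3) := by
      linear_combination (2 / 3 - 2 / 3 * s ^ 3) * hHV
    rw [e]
    have hs0 : 0 < s - 1 := by linarith
    have hd1 : 0 < δ'' - 1 := by linarith
    have hd2 : 0 < δ'' - 1 / 2 := by linarith
    calc (δ'' - 1) * (2 * √(2 * π) * δ'' / H) ^ 2 * (s - 1) ≤ (δ'' - 1) * A * (s - 1) := by gcongr
      _ = A * ((s - 1) * (δ'' - 1)) := by ring
      _ < _ := by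
        refine mul_lt_mul_of_pos_left ?_ hA
        have : 0 < (s - 1) ^ 2 * (δ'' - 1 / 2) := by positivity
        have : 0 < δ'' * (s - 1) ^ 3 / 3 := by positivity
        linarith
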